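/- arXiv:1607.07174 — 3 statements merged into one kernel-verified Lean document; each statement's English description precedes it below -/
import Mathlib

section
/- For every finite simple graph G with at least one edge, the acyclic chromatic number satisfies χ_acyc(G) ≤ 3^{f_1(G)}, i.e., log_3(χ_acyc(G)) ≤ f_1(G). -/
open scoped Classical

namespace InducedArboricity

/-- The edges of the subgraph of `G` induced by vertex set `S`, viewed as edges of `G`. -/
def forestEdges {V : Type*} (G : SimpleGraph V) (S : Set V) : Set (Sym2 V) :=
  {e | e ∈ G.edgeSet ∧ ∀ x ∈ e, x ∈ S}

/-- The number of edges of the connected component of `v` in `H`. -/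
noncomputable def compEdgeCount {W : Type*} (H : SimpleGraph W) (v : W) : ℕ :=
  {e | e ∈ H.edgeSet ∧ ∀ x ∈ e, H.Reachable v x}.ncard

/-- `S` induces a `k`-strong forest in `G`: the induced subgraph is acyclic and each of its
connected components has at least `k` edges. -/
def IsStrongForest {V : Type*} (G : SimpleGraph V) (k : ℕ) (S : Set V) : Prop :=
  (G.induce S).IsAcyclic ∧ ∀ v : S, k ≤ compEdgeCount (G.induce S) v

/-- An edge `e` of `G` is `k`-valid if it lies in some `k`-strong forest of `G`. -/
def KValid {V : Type*} (G : SimpleGraph V) (k : ℕ) (e : Sym2 V) : Prop :=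
  ∃ S : Set V, IsStrongForest G k S ∧ e ∈ forestEdges G S

/-- The `k`-strong induced arboricity: the least number of `k`-strong forests of `G`
covering all `k`-valid edges of `G`. -/
noncomputable def fStrong {V : Type*} (G : SimpleGraph V) (k : ℕ) : ℕ :=
  sInf {N | ∃ F : Fin N → Set V,
    (∀ i, IsStrongForest G k (F i)) ∧
    ∀ e : Sym2 V, KValid G k e → ∃ i, e ∈ forestEdges G (F i)}

/-- `G` is a `d`-shallow minor of `H`. -/
def IsShallowMinor {V W : Type*} (d : ℕ) (G : SimpleGraph V) (H : SimpleGraph W) : Prop :=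
  ∃ B : V → Set W,
    Pairwise (Function.onFun Disjoint B) ∧
    (∀ v, ∃ c : B v, ∀ y : B v,
      (H.induce (B v)).Reachable c y ∧ (H.induce (B v)).dist c y ≤ d) ∧
    (∀ u v, G.Adj u v → ∃ x ∈ B u, ∃ y ∈ B v, H.Adj x y)

/-- A class of finite simple graphs, one set of graphs for each number of vertices. -/
def GraphClass : Type :=
  ∀ n : ℕ, Set (SimpleGraph (Fin n))

/-- A class of graphs has bounded expansion if for every `d` there is a constant `a` such that
every `d`-shallow minor of a member of the class has at most `a` times as many edges
as vertices. -/
def BoundedExpansion (C : GraphClass) : Prop :=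
  ∀ d : ℕ, ∃ a : ℕ, ∀ (m : ℕ) (G : SimpleGraph (Fin m)),
    (∃ n : ℕ, ∃ H ∈ C n, IsShallowMinor d G H) → G.edgeSet.ncard ≤ a * m

/-- A class of graphs is nowhere dense if for every `d` some graph is not a `d`-shallow minor
of any member of the class. -/
def NowhereDense (C : GraphClass) : Prop :=
  ∀ d : ℕ, ∃ (m : ℕ) (G : SimpleGraph (Fin m)), ¬ ∃ n : ℕ, ∃ H ∈ C n, IsShallowMinor d G H

/-- The closed neighborhood of `v` in `G`. -/
def closedNbr {V : Type*} (G : SimpleGraph V) (v : V) : Set V :=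
  insert v (G.neighborSet v)

/-- The sum of the labels over the closed neighborhood of `v`. -/
noncomputable def closedNbrSum {V : Type*} [Fintype V] (G : SimpleGraph V)
    (f : V → ℕ) (v : V) : ℕ :=
  ∑ x : V, if x ∈ closedNbr G v then f x else 0

/-- A labeling is distinguishing if adjacent vertices with different closed neighborhoods
receive different label sums over their closed neighborhoods. -/
def Distinguishing {V : Type*} [Fintype V] (G : SimpleGraph V) (f : V → ℕ) : Prop :=
  ∀ u v : V, G.Adj u v → closedNbr G u ≠ closedNbr G v →
    closedNbrSum G f u ≠ closedNbrSum G f v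

/-- The adjacent closed vertex-distinguishing number of `G`. -/
noncomputable def disNumber {V : Type*} [Fintype V] (G : SimpleGraph V) : ℕ :=
  sInf {L | 1 ≤ L ∧ ∃ f : V → ℕ, (∀ v, 1 ≤ f v ∧ f v ≤ L) ∧ Distinguishing G f}

/-- A proper coloring in which any two color classes together induce a forest. -/
def IsAcyclicColoring {V : Type*} (G : SimpleGraph V) {m : ℕ} (c : V → Fin m) : Prop :=
  (∀ u v : V, G.Adj u v → c u ≠ c v) ∧
  ∀ i j : Fin m, (G.induce {v | c v = i ∨ c v = j}).IsAcyclic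

/-- The acyclic chromatic number of `G`. -/
noncomputable def chiAcyc {V : Type*} (G : SimpleGraph V) : ℕ :=
  sInf {m | ∃ c : V → Fin m, IsAcyclicColoring G c}

/-- The edge arboricity of `G`: the least number of (not necessarily induced) forests
covering all edges of `G`. -/
noncomputable def arboricity {V : Type*} (G : SimpleGraph V) : ℕ :=
  sInf {N | ∃ F : Fin N → SimpleGraph V,
    (∀ i, F i ≤ G ∧ (F i).IsAcyclic) ∧
    ∀ e ∈ G.edgeSet, ∃ i, e ∈ (F i).edgeSet}

/-- `G` admits a tree decomposition of width at most `t`. -/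
def HasTreewidthAtMost {V : Type*} (G : SimpleGraph V) (t : ℕ) : Prop :=
  ∃ (ι : Type) (T : SimpleGraph ι) (B : ι → Finset V),
    T.IsTree ∧
    (∀ e ∈ G.edgeSet, ∃ i, ∀ x ∈ e, x ∈ B i) ∧
    (∀ v : V, (T.induce {i | v ∈ B i}).Connected) ∧
    (∀ i, (B i).card ≤ t + 1)

/-- The tree-width of `G`. -/
noncomputable def treewidth {V : Type*} (G : SimpleGraph V) : ℕ :=
  sInf {t | HasTreewidthAtMost G t}

/-- `G` has tree-depth at most `d`: there is a "forest order" on the vertices (the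
ancestor order of a rooted spanning forest) in which ancestor sets are chains of at most
`d` vertices and endpoints of edges of `G` are comparable.  Equivalently, every connected
component of `G` is a subgraph of the transitive closure of a rooted tree of depth `d`. -/
def HasTreedepthAtMost {V : Type*} (G : SimpleGraph V) (d : ℕ) : Prop :=
  ∃ le : V → V → Prop, IsPartialOrder V le ∧
    (∀ v : V, IsChain le {u | le u v}) ∧
    (∀ u v : V, G.Adj u v → le u v ∨ le v u) ∧
    (∀ v : V, {u | le u v}.ncard ≤ d)

/-- The tree-depth of `G`. -/
noncomputable def treedepth {V : Type*} (G : SimpleGraph V) : ℕ :=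
  sInf {d | HasTreedepthAtMost G d}

/-- `G` is a minor of `H`, witnessed by disjoint connected branch sets. -/
def IsMinorOf {V W : Type*} (G : SimpleGraph V) (H : SimpleGraph W) : Prop :=
  ∃ B : V → Set W,
    Pairwise (Function.onFun Disjoint B) ∧
    (∀ v, (B v).Nonempty) ∧
    (∀ v, (H.induce (B v)).Connected) ∧
    (∀ u v, G.Adj u v → ∃ x ∈ B u, ∃ y ∈ B v, H.Adj x y)

/-- A class of graphs closed under taking minors. -/
def MinorClosed (C : GraphClass) : Prop :=
  ∀ (m n : ℕ) (G : SimpleGraph (Fin m)) (H : SimpleGraph (Fin n)),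
    H ∈ C n → IsMinorOf G H → G ∈ C m

/-- Planarity, via Wagner's characterization: no `K₅` and no `K₃,₃` minor. -/
def IsPlanar {V : Type*} (G : SimpleGraph V) : Prop :=
  ¬ IsMinorOf (SimpleGraph.completeGraph (Fin 5)) G ∧
  ¬ IsMinorOf (completeBipartiteGraph (Fin 3) (Fin 3)) G

/- Colour each forest of a cover with two colours and give everything outside it a third one; the
vector of these colours is the desired colouring. If `u` and `v` are adjacent, some forest `F i` of
the cover contains both, so all vertices coloured like `u` or like `v` have `i`-th coordinate other
than the outside colour. Hence these two colour classes lie in `F i` and induce a forest. -/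

section Cover

variable {V : Type*} {G : SimpleGraph V} {k : ℕ}

/-- A family of `k`-strong forests covering all `k`-valid edges; `fStrong G k` is the least `N` for
which there is such a family indexed by `Fin N`. -/
def IsStrongForestCover {ι : Type*} (G : SimpleGraph V) (k : ℕ) (F : ι → Set V) : Prop :=
  (∀ i, IsStrongForest G k (F i)) ∧ ∀ e, KValid G k e → ∃ i, e ∈ forestEdges G (F i)

theorem exists_isStrongForestCover [Finite V] (G : SimpleGraph V) (k : ℕ) :
    ∃ (N : ℕ) (F : Fin N → Set V), IsStrongForestCover G k F := by
  obtain ⟨N, ⟨φ⟩⟩ := Finite.exists_equiv_fin {S : Set V // IsStrongForest G k S}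
  refine ⟨N, fun i => (φ.symm i).1, fun i => (φ.symm i).2, ?_⟩
  rintro e ⟨S, hS, he⟩
  exact ⟨φ ⟨S, hS⟩, by simpa only [Equiv.symm_apply_apply] using he⟩

theorem exists_isStrongForestCover_fin_fStrong
    (hcover : ∃ (N : ℕ) (F : Fin N → Set V), IsStrongForestCover G k F) :
    ∃ F : Fin (fStrong G k) → Set V, IsStrongForestCover G k F :=
  Nat.sInf_mem hcover

theorem IsStrongForestCover.exists_mem_of_kValid {ι : Type*} {F : ι → Set V}
    (hF : IsStrongForestCover G k F) {u v : V} (hvalid : KValid G k s(u, v)) :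
    ∃ i, u ∈ F i ∧ v ∈ F i := by
  obtain ⟨i, -, hi⟩ := hF.2 s(u, v) hvalid
  exact ⟨i, hi u (Sym2.mem_mk_left u v), hi v (Sym2.mem_mk_right u v)⟩

end Cover

section Validity

theorem one_le_compEdgeCount_of_adj {W : Type*} [Finite W] {H : SimpleGraph W} {v w : W}
    (hvw : H.Adj v w) : 1 ≤ compEdgeCount H v := by
  refine (Set.ncard_pos (Set.toFinite _)).2 ⟨s(v, w), hvw, fun x hx => ?_⟩
  obtain rfl | rfl := Sym2.mem_iff.1 hx
  exacts [SimpleGraph.Reachable.refl _, hvw.reachable]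

variable {V : Type*} {G : SimpleGraph V} {u v : V}

theorem isStrongForest_one_pair (huv : G.Adj u v) : IsStrongForest G 1 {u, v} := by
  refine ⟨.of_card_le_two (Set.encard_pair huv.ne).le, ?_⟩
  have hadj : (G.induce {u, v}).Adj ⟨u, .inl rfl⟩ ⟨v, .inr rfl⟩ := huv
  rintro ⟨w, rfl | rfl⟩
  exacts [one_le_compEdgeCount_of_adj hadj, one_le_compEdgeCount_of_adj hadj.symm]

theorem kValid_one_of_adj (huv : G.Adj u v) : KValid G 1 s(u, v) :=
  ⟨{u, v}, isStrongForest_one_pair huv, huv, fun _ hx => Sym2.mem_iff.1 hx⟩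

end Validity

section Coloring

variable {V : Type*} {G : SimpleGraph V}

theorem exists_coloring_fin_succ_of_colorable_induce {S : Set V} {n : ℕ}
    (hS : (G.induce S).Colorable n) :
    ∃ c : V → Fin (n + 1), (∀ v, c v ≠ Fin.last n ↔ v ∈ S) ∧
      ∀ u ∈ S, ∀ v ∈ S, G.Adj u v → c u ≠ c v := by
  obtain ⟨C⟩ := hS
  refine ⟨fun v => if hv : v ∈ S then (C ⟨v, hv⟩).castSucc else Fin.last n, fun v => ?_, ?_⟩
  · by_cases hv : v ∈ S
    · simpa only [hv, dif_pos, iff_true] using Fin.castSucc_ne_last _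
    · simp only [hv, dif_neg, not_false_eq_true, ne_eq, not_true]
  · intro u hu v hv huv
    simpa only [hu, hv, dif_pos, ne_eq, Fin.castSucc_inj] using
      C.valid (v := ⟨u, hu⟩) (w := ⟨v, hv⟩) huv

/-- Two colour classes with no edge between them induce an edgeless graph, so only the pairs of
classes met by an edge matter. -/
theorem isAcyclicColoring_of_adj {m : ℕ} {c : V → Fin m}
    (hproper : ∀ u v, G.Adj u v → c u ≠ c v)
    (hacyclic : ∀ u v, G.Adj u v → (G.induce {w | c w = c u ∨ c w = c v}).IsAcyclic) :
    IsAcyclicColoring G c := by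
  refine ⟨hproper, fun a b => ?_⟩
  by_cases hedge : ∃ u v, G.Adj u v ∧ c u = a ∧ c v = b
  · obtain ⟨u, v, huv, rfl, rfl⟩ := hedge
    exact hacyclic u v huv
  · have hbot : G.induce {w | c w = a ∨ c w = b} = ⊥ := by
      refine SimpleGraph.eq_bot_iff_forall_not_adj.2 ?_
      rintro ⟨x, hx | hx⟩ ⟨y, hy | hy⟩ (hxy : G.Adj x y)
      · exact hproper x y hxy (hx.trans hy.symm)
      · exact hedge ⟨x, y, hxy, hx, hy⟩
      · exact hedge ⟨y, x, hxy.symm, hy, hx⟩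
      · exact hproper x y hxy (hx.trans hy.symm)
    exact hbot ▸ SimpleGraph.isAcyclic_bot

theorem exists_isAcyclicColoring_of_forall_adj_exists_mem {N : ℕ} {F : Fin N → Set V}
    (hforest : ∀ i, (G.induce (F i)).IsAcyclic)
    (hcover : ∀ u v, G.Adj u v → ∃ i, u ∈ F i ∧ v ∈ F i) :
    ∃ c : V → Fin (3 ^ N), IsAcyclicColoring G c := by
  choose c hmem hproper using fun i =>
    exists_coloring_fin_succ_of_colorable_induce (hforest i).colorable_two
  let C : V → Fin (3 ^ N) := fun v => finFunctionFinEquiv fun i => c i v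
  have hcoord {v w : V} (h : C v = C w) (i : Fin N) : c i v = c i w :=
    congrFun (finFunctionFinEquiv.injective h) i
  have hclass {v w : V} {i : Fin N} (hv : v ∈ F i) (h : C w = C v) : w ∈ F i := by
    rwa [← hmem, hcoord h, hmem]
  refine ⟨C, isAcyclicColoring_of_adj (fun u v huv hC => ?_) fun u v huv => ?_⟩ <;>
    obtain ⟨i, hu, hv⟩ := hcover u v huv
  · exact hproper i u hu v hv huv (hcoord hC i)
  · have hsub : {w | C w = C u ∨ C w = C v} ⊆ F i := fun w hw =>
      hw.elim (hclass hu) (hclass hv)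
    exact (hforest i).embedding (SimpleGraph.induceHomOfLE G hsub)

end Coloring

theorem chiAcyc_le_three_pow_fStrong_one_general {V : Type*} (G : SimpleGraph V) {k : ℕ}
    (hvalid : ∀ e ∈ G.edgeSet, KValid G k e)
    (hcover : ∃ (N : ℕ) (F : Fin N → Set V), IsStrongForestCover G k F) :
    chiAcyc G ≤ 3 ^ fStrong G k := by
  obtain ⟨F, hF⟩ := exists_isStrongForestCover_fin_fStrong hcover
  exact Nat.sInf_le <| exists_isAcyclicColoring_of_forall_adj_exists_mem (fun i => (hF.1 i).1)
    fun u v huv => hF.exists_mem_of_kValid (hvalid s(u, v) huv)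

/-- For every finite simple graph `G` with at least one edge,
`χ_acyc(G) ≤ 3 ^ f₁(G)`, i.e. `log₃ χ_acyc(G) ≤ f₁(G)`. -/
theorem chiAcyc_le_three_pow_fStrong_one {V : Type} [Fintype V] (G : SimpleGraph V)
    (hE : G.edgeSet.Nonempty) :
    chiAcyc G ≤ 3 ^ fStrong G 1 :=
  chiAcyc_le_three_pow_fStrong_one_general G (Sym2.ind fun _ _ => kValid_one_of_adj)
    (exists_isStrongForestCover G 1)

end InducedArboricity
end

section
/- For every integer k ≥ 1 there exists a finite simple graph G with tree-width tw(G) = 2 and f_k(G) ≥ k. -/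
open scoped Classical

namespace InducedArboricity

/-!
Take a triangle `apex`, `hub`, `top`, attach `k` pendant vertices to `hub`, and join `top` to a new
vertex `bottom` by `k - 1` paths of length two. Since `bottom` has degree less than `k`, its
component in a `k`-strong forest cannot be a star around it, so a `k`-strong forest through `bottom`
contains `top`. It then contains at most one of the midpoints, as two would close a 4-cycle, and not
both `hub` and `apex`, which would close the triangle. Hence the `k` edges from the midpoints to
`bottom` and from `hub` to `apex` lie in pairwise distinct `k`-strong forests; the star at `hub`
makes each of them `k`-valid.

The vertices `hub`, `top`, `bottom` cover all edges, and every other vertex has at most two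
neighbours, so the tree-width is at most two; the triangle makes it at least two.
-/

section AcyclicGraphs

open SimpleGraph

variable {V : Type*} {G : SimpleGraph V}

theorem not_isAcyclic_of_triangle {x y z : V} (hxy : G.Adj x y) (hxz : G.Adj x z)
    (hyz : G.Adj y z) : ¬ G.IsAcyclic := fun hG =>
  hG.cliqueFree le_rfl {x, y, z} (is3Clique_triple_iff.2 ⟨hxy, hxz, hyz⟩)

theorem commonNeighbors_subsingleton_of_isAcyclic (hG : G.IsAcyclic) {x z : V} (hxz : x ≠ z) :
    (G.commonNeighbors x z).Subsingleton := by
  rintro y ⟨hxy, hzy⟩ w ⟨hxw, hzw⟩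
  rw [mem_neighborSet] at hxy hzy hxw hzw
  have hpath := (hG.subsingleton_path x z).elim
    ⟨.cons hxy (.cons hzy.symm .nil), by simp [hxy.ne, hzy.ne', hxz]⟩
    ⟨.cons hxw (.cons hzw.symm .nil), by simp [hxw.ne, hzw.ne', hxz]⟩
  simpa using congrArg (fun p : G.Path x z => p.1.snd) hpath

theorem isTree_induce_insert_of_isIndepSet {r : V} {S : Set V} (hS : G.IsIndepSet S)
    (hr : ∀ x ∈ S, G.Adj r x) : (G.induce (insert r S)).IsTree := by
  have hstar : G.induce (insert r S) = starGraph ⟨r, Set.mem_insert r S⟩ := by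
    ext ⟨x, hx⟩ ⟨y, hy⟩
    rw [starGraph_adj, comap_adj]
    simp only [Function.Embedding.subtype_apply, ne_eq, Subtype.mk.injEq]
    refine ⟨fun h => ⟨h.ne, ?_⟩, ?_⟩
    · by_contra! hne
      exact hS (hx.resolve_left hne.1) (hy.resolve_left hne.2) h.ne h
    · rintro ⟨hxy, rfl | rfl⟩
      · exact hr y (hy.resolve_left (Ne.symm hxy))
      · exact (hr x (hx.resolve_left hxy)).symm
  exact hstar ▸ isTree_starGraph _

theorem isAcyclic_induce_insert {x : V} {S : Set V} (hS : (G.induce S).IsAcyclic)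
    (hx : (S ∩ G.neighborSet x).Subsingleton) : (G.induce (insert x S)).IsAcyclic := by
  intro u p hp
  by_cases hxp : ⟨x, Set.mem_insert x S⟩ ∈ p.support
  · have hq := hp.rotate hxp
    have neighbor_mem (y : ↥(insert x S))
        (hy : (G.induce (insert x S)).Adj ⟨x, Set.mem_insert x S⟩ y) :
        y.1 ∈ S ∩ G.neighborSet x :=
      ⟨y.2.resolve_left fun h => hy.ne (Subtype.ext h.symm), hy⟩
    exact hq.snd_ne_penultimate <| Subtype.ext <|
      hx (neighbor_mem _ (Walk.adj_snd hq.not_nil))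
        (neighbor_mem _ (Walk.adj_penultimate hq.not_nil).symm)
  · let q := p.map (Embedding.induce (insert x S)).toHom
    have hqS : ∀ y ∈ q.support, y ∈ S := by
      intro y hy
      obtain ⟨z, hz, rfl⟩ := List.mem_map.1 (Walk.support_map _ p ▸ hy)
      exact z.2.resolve_left fun h => hxp (by rwa [show z = ⟨x, _⟩ from Subtype.ext h] at hz)
    refine hS (q.induce S hqS) ?_
    rw [← Walk.isCycle_map_iff_of_injective (f := (Embedding.induce (G := G) S).toHom)
      Subtype.val_injective, Walk.map_induce]
    exact hp.map Subtype.val_injective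

theorem isTree_induce_insert {x : V} {S : Set V} (hS : (G.induce S).IsTree)
    (hx : ∃! y, y ∈ S ∩ G.neighborSet x) : (G.induce (insert x S)).IsTree := by
  obtain ⟨y, ⟨hyS, hxy⟩, hy⟩ := hx
  refine ⟨?_, isAcyclic_induce_insert hS.isAcyclic fun z hz w hw => (hy z hz).trans (hy w hw).symm⟩
  have hedge : (G.induce {x, y}).Connected := induce_pair_connected_of_adj hxy
  have hunion : {x, y} ∪ S = insert x S := by
    rw [Set.insert_union, Set.singleton_union, Set.insert_eq_of_mem hyS]
  exact hunion ▸ induce_union_connected hedge.preconnected hS.connected.preconnected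
    ⟨y, by simp, hyS⟩

theorem exists_walk_support_subset {S : Set V} (hS : (G.induce S).Connected) {x y : V}
    (hx : x ∈ S) (hy : y ∈ S) : ∃ p : G.Walk x y, ∀ z ∈ p.support, z ∈ S := by
  obtain ⟨p⟩ := hS.preconnected ⟨x, hx⟩ ⟨y, hy⟩
  refine ⟨p.map (Embedding.induce S).toHom, fun z hz => ?_⟩
  obtain ⟨w, -, rfl⟩ := List.mem_map.1 (Walk.support_map (Embedding.induce S).toHom p ▸ hz)
  exact w.2

/- The path inside `B` from `A ∩ B` to `B ∩ C` is the only path between its endpoints, so it also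
runs inside `A ∪ C`; the edge along which it leaves `A` therefore lies in `C`. -/
theorem inter_nonempty_of_isAcyclic (hG : G.IsAcyclic) {A B C : Set V}
    (hA : (G.induce A).Connected) (hB : (G.induce B).Connected) (hC : (G.induce C).Connected)
    (hAB : (A ∩ B).Nonempty) (hBC : (B ∩ C).Nonempty) (hAC : (A ∩ C).Nonempty) :
    (A ∩ B ∩ C).Nonempty := by
  obtain ⟨x, hxA, hxB⟩ := hAB
  obtain ⟨y, hyB, hyC⟩ := hBC
  obtain ⟨z, hzA, hzC⟩ := hAC
  by_cases hyA : y ∈ A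
  · exact ⟨y, ⟨hyA, hyB⟩, hyC⟩
  obtain ⟨p, hp⟩ := exists_walk_support_subset hB hxB hyB
  obtain ⟨q, hq⟩ := exists_walk_support_subset hA hxA hzA
  obtain ⟨r, hr⟩ := exists_walk_support_subset hC hzC hyC
  obtain ⟨d, hd, hdA, hdA'⟩ := p.toPath.1.exists_boundary_dart A hxA hyA
  have hdB : d.fst ∈ B :=
    hp _ (p.support_bypass_subset_support (Walk.dart_fst_mem_support_of_mem_darts _ hd))
  have hedge : s(d.fst, d.snd) ∈ (q.append r).edges := by
    apply (q.append r).edges_toPath_subset_edges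
    rw [← (hG.subsingleton_path x y).elim p.toPath (q.append r).toPath]
    exact List.mem_map_of_mem hd
  rw [Walk.edges_append, List.mem_append] at hedge
  rcases hedge with hedge | hedge
  · exact absurd (hq _ (Walk.snd_mem_support_of_mem_edges _ hedge)) hdA'
  · exact ⟨d.fst, ⟨hdA, hdB⟩, hr _ (Walk.fst_mem_support_of_mem_edges _ hedge)⟩

end AcyclicGraphs

section Treewidth

open SimpleGraph

variable {V W : Type*} {G : SimpleGraph V} {G' : SimpleGraph W} {t : ℕ}

theorem HasTreewidthAtMost.of_injective_hom (f : G →g G') (hf : Function.Injective f)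
    (h : HasTreewidthAtMost G' t) : HasTreewidthAtMost G t := by
  obtain ⟨ι, T, B, hT, hedge, hconn, hcard⟩ := h
  refine ⟨ι, T, fun i => (B i).preimage f hf.injOn, hT, fun e he => ?_, fun v => ?_, fun i => ?_⟩
  · obtain ⟨i, hi⟩ := hedge _ (f.map_mem_edgeSet he)
    exact ⟨i, fun x hx => Finset.mem_preimage.2 (hi _ (Sym2.mem_map.2 ⟨x, hx, rfl⟩))⟩
  · rw [show {i | v ∈ (B i).preimage f hf.injOn} = {i | f v ∈ B i} by ext; simp]
    exact hconn (f v)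
  · exact (Finset.card_le_card_of_injOn f (by simp [Set.MapsTo]) hf.injOn).trans (hcard i)

theorem treewidth_congr (φ : G ≃g G') : treewidth G = treewidth G' :=
  congrArg sInf <| Set.ext fun _ =>
    ⟨.of_injective_hom φ.symm.toHom φ.symm.injective, .of_injective_hom φ.toHom φ.injective⟩

theorem HasTreewidthAtMost.two_le_of_triangle (h : HasTreewidthAtMost G t) {a b c : V}
    (hab : G.Adj a b) (hac : G.Adj a c) (hbc : G.Adj b c) : 2 ≤ t := by
  obtain ⟨ι, T, B, hT, hedge, hconn, hcard⟩ := h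
  have bags_meet {x y : V} (hxy : G.Adj x y) : ({i | x ∈ B i} ∩ {i | y ∈ B i}).Nonempty := by
    obtain ⟨i, hi⟩ := hedge s(x, y) hxy
    exact ⟨i, hi x (by simp), hi y (by simp)⟩
  obtain ⟨i, ⟨ha, hb⟩, hc⟩ := inter_nonempty_of_isAcyclic hT.isAcyclic (hconn a) (hconn b)
    (hconn c) (bags_meet hab) (bags_meet hbc) (bags_meet hac)
  have hsub : {a, b, c} ⊆ B i := by
    simp only [Finset.insert_subset_iff, Finset.singleton_subset_iff]
    exact ⟨ha, hb, hc⟩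
  have htriple : ({a, b, c} : Finset V).card = 3 :=
    Finset.card_eq_three.2 ⟨a, b, c, hab.ne, hac.ne, hbc.ne, rfl⟩
  have := (Finset.card_le_card hsub).trans (hcard i)
  omega

/- The decomposition tree is a star: its centre carries the cover `K`, and each vertex outside `K`
has a leaf carrying it together with its neighbours. -/
theorem hasTreewidthAtMost_of_isVertexCover {V : Type} {G : SimpleGraph V} {K : Finset V}
    (hcover : G.IsVertexCover K) (hK : K.card ≤ t + 1)
    (hdeg : ∀ x ∉ K, (K.filter (G.Adj x)).card ≤ t) : HasTreewidthAtMost G t := by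
  let bag : Option {x // x ∉ K} → Finset V :=
    fun o => o.elim K fun x => insert x.1 (K.filter (G.Adj x))
  have mem_leaf {x : {x // x ∉ K}} {y : V} : y ∈ bag (some x) ↔ y = x ∨ y ∈ K ∧ G.Adj x y := by
    simp [bag]
  have edge_in_leaf {x y : V} (hx : x ∉ K) (hxy : G.Adj x y) :
      ∀ z ∈ s(x, y), z ∈ bag (some ⟨x, hx⟩) := by
    have hy : y ∈ K := (hcover hxy).resolve_left hx
    simp [mem_leaf, hy, hxy]
  refine ⟨_, starGraph none, bag, isTree_starGraph _, fun e he => ?_, fun v => ?_, ?_⟩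
  · induction e with | _ x y
    by_cases hx : x ∈ K
    · by_cases hy : y ∈ K
      · exact ⟨none, by simp [bag, hx, hy]⟩
      · exact ⟨_, Sym2.eq_swap ▸ edge_in_leaf hy (G.adj_symm he)⟩
    · exact ⟨_, edge_in_leaf hx he⟩
  · by_cases hv : v ∈ K
    · refine .of_isUniversal (v := ⟨none, hv⟩) fun o ho => ?_
      exact starGraph_center_adj fun h => ho (Subtype.ext h)
    · have hsingle : {o | v ∈ bag o} = {some ⟨v, hv⟩} := by
        ext (_ | x)
        · simpa [bag] using hv
        · simp [mem_leaf, hv, Subtype.ext_iff, eq_comm]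
      rw [hsingle]
      exact IsTree.of_subsingleton.connected
  · rintro (_ | ⟨x, hx⟩)
    · exact hK
    · exact (Finset.card_insert_le _ _).trans (Nat.succ_le_succ (hdeg x hx))

end Treewidth

section StrongForests

open SimpleGraph

variable {V W : Type*} {G : SimpleGraph V} {G' : SimpleGraph W} {k : ℕ}

theorem compEdgeCount_eq_ncard_edgeSet (hG : G.Connected) (v : V) :
    compEdgeCount G v = G.edgeSet.ncard := by
  simp [compEdgeCount, hG.preconnected v _]

theorem IsStrongForest.of_isTree {S : Set V} (hS : (G.induce S).IsTree)
    (hcard : k < S.ncard) : IsStrongForest G k S := by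
  refine ⟨hS.isAcyclic, fun v => ?_⟩
  have := (Set.finite_of_ncard_pos (Nat.zero_lt_of_lt hcard)).to_subtype
  have hedges := (isTree_iff_connected_and_card.1 hS).2
  rw [Nat.card_coe_set_eq, Nat.card_coe_set_eq] at hedges
  rw [compEdgeCount_eq_ncard_edgeSet hS.connected]
  omega

/- Without a walk of length two leaving `v`, the component of `v` is a star centred at `v`. -/
theorem compEdgeCount_le_encard_neighborSet {v : V}
    (hv : ∀ x y, G.Adj v x → G.Adj x y → y = v) :
    (compEdgeCount G v : ℕ∞) ≤ (G.neighborSet v).encard := by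
  have adj_of_reachable {x : V} (hx : G.Reachable v x) : x = v ∨ G.Adj v x := by
    induction (reachable_iff_reflTransGen v x).1 hx with
    | refl => exact .inl rfl
    | tail hvy hyz ih =>
      rcases ih ((reachable_iff_reflTransGen _ _).2 hvy) with rfl | h
      · exact .inr hyz
      · exact .inl (hv _ _ h hyz)
  have hsub : {e | e ∈ G.edgeSet ∧ ∀ x ∈ e, G.Reachable v x} ⊆ G.incidenceSet v := by
    rintro e ⟨he, hreach⟩
    induction e with | _ x y
    refine ⟨he, ?_⟩
    rcases adj_of_reachable (hreach x (by simp)) with rfl | hx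
    · simp
    · simp [hv x y hx he]
  calc (compEdgeCount G v : ℕ∞)
      ≤ {e | e ∈ G.edgeSet ∧ ∀ x ∈ e, G.Reachable v x}.encard := Set.ncard_le_encard _
    _ ≤ (G.incidenceSet v).encard := Set.encard_le_encard hsub
    _ = (G.neighborSet v).encard := Set.encard_congr (G.incidenceSetEquivNeighborSet v)

theorem IsStrongForest.exists_adj_adj {S : Set V} (hS : IsStrongForest G k S) {v : V}
    (hv : v ∈ S) (hdeg : (G.neighborSet v).encard < k) :
    ∃ x ∈ S, ∃ y ∈ S, G.Adj v x ∧ G.Adj x y ∧ y ≠ v := by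
  by_contra! hstar
  have hcount : (compEdgeCount (G.induce S) ⟨v, hv⟩ : ℕ∞) ≤
      ((G.induce S).neighborSet ⟨v, hv⟩).encard :=
    compEdgeCount_le_encard_neighborSet fun x y hvx hxy =>
      Subtype.ext (hstar x x.2 y y.2 hvx hxy)
  have hinduce : ((G.induce S).neighborSet ⟨v, hv⟩).encard ≤ (G.neighborSet v).encard := by
    rw [← Subtype.val_injective.encard_image]
    exact Set.encard_le_encard (by rintro _ ⟨x, hx, rfl⟩; exact hx)
  have hk : (k : ℕ∞) ≤ compEdgeCount (G.induce S) ⟨v, hv⟩ := mod_cast hS.2 ⟨v, hv⟩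
  exact (hk.trans (hcount.trans hinduce)).not_gt hdeg

/-- The `k`-valid edges of `G` can be covered by `N` `k`-strong forests, which need not be distinct.
The infimum of all such `N` is `fStrong G k`. -/
def HasStrongForestCover (G : SimpleGraph V) (k N : ℕ) : Prop :=
  ∃ F : Fin N → Set V, (∀ i, IsStrongForest G k (F i)) ∧
    ∀ e : Sym2 V, KValid G k e → ∃ i, e ∈ forestEdges G (F i)

theorem hasStrongForestCover_fStrong [Finite V] (G : SimpleGraph V) (k : ℕ) :
    HasStrongForestCover G k (fStrong G k) := by
  refine Nat.sInf_mem (s := {N | HasStrongForestCover G k N}) ?_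
  let φ := Finite.equivFin {S : Set V // IsStrongForest G k S}
  refine ⟨_, fun i => φ.symm i, fun i => (φ.symm i).2, ?_⟩
  rintro e ⟨S, hS, he⟩
  exact ⟨φ ⟨S, hS⟩, by simpa using he⟩

theorem card_le_fStrong [Finite V] {ι : Type*} [Fintype ι] (e : ι → Sym2 V)
    (hvalid : ∀ i, KValid G k (e i))
    (hforest : ∀ S, IsStrongForest G k S → {i | e i ∈ forestEdges G S}.Subsingleton) :
    Fintype.card ι ≤ fStrong G k := by
  obtain ⟨F, hF, hcover⟩ := hasStrongForestCover_fStrong G k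
  choose g hg using fun i => hcover (e i) (hvalid i)
  have hinj : Function.Injective g := fun i j hij =>
    hforest (F (g j)) (hF (g j)) (hij ▸ hg i) (hg j)
  simpa using Fintype.card_le_of_injective g hinj

theorem compEdgeCount_congr (φ : G ≃g G') (v : V) :
    compEdgeCount G v = compEdgeCount G' (φ v) := by
  have hsurj : Function.Surjective (Sym2.map φ) := fun e => ⟨e.map φ.symm, by simp [Sym2.map_map]⟩
  rw [compEdgeCount, compEdgeCount, ← Set.ncard_preimage_of_injective_subset_range
    (Sym2.map.injective φ.injective) (by simp [hsurj.range_eq])]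
  congr 1
  ext e
  induction e with | _ x y
  simp [Iso.reachable_iff, φ.map_adj_iff]

theorem IsStrongForest.preimage (φ : G ≃g G') {S : Set W} (hS : IsStrongForest G' k S) :
    IsStrongForest G k (φ ⁻¹' S) := by
  let ψ : G.induce (φ ⁻¹' S) ≃g G'.induce S :=
    ⟨φ.toEquiv.subtypeEquiv fun _ => Iff.rfl, φ.map_adj_iff⟩
  exact ⟨ψ.isAcyclic_iff.2 hS.1, fun v => compEdgeCount_congr ψ v ▸ hS.2 (ψ v)⟩

theorem mk_mem_forestEdges_iff {S : Set V} {x y : V} :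
    s(x, y) ∈ forestEdges G S ↔ G.Adj x y ∧ x ∈ S ∧ y ∈ S := by
  simp [forestEdges]

theorem map_mem_forestEdges_iff (φ : G ≃g G') {S : Set W} {e : Sym2 V} :
    e.map φ ∈ forestEdges G' S ↔ e ∈ forestEdges G (φ ⁻¹' S) := by
  induction e with | _ x y
  simp [mk_mem_forestEdges_iff, φ.map_adj_iff]

theorem KValid.map (φ : G ≃g G') {e : Sym2 V} (he : KValid G k e) : KValid G' k (e.map φ) := by
  obtain ⟨S, hS, heS⟩ := he
  refine ⟨φ.symm ⁻¹' S, hS.preimage φ.symm, (map_mem_forestEdges_iff φ).2 ?_⟩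
  rwa [← Set.preimage_comp, show φ.symm ∘ φ = id from φ.symm_comp_self, Set.preimage_id]

theorem HasStrongForestCover.comap {N : ℕ} (φ : G ≃g G') (h : HasStrongForestCover G' k N) :
    HasStrongForestCover G k N := by
  obtain ⟨F, hF, hcover⟩ := h
  refine ⟨fun i => φ ⁻¹' F i, fun i => (hF i).preimage φ, fun e he => ?_⟩
  obtain ⟨i, hi⟩ := hcover _ (he.map φ)
  exact ⟨i, (map_mem_forestEdges_iff φ).1 hi⟩

theorem fStrong_congr (φ : G ≃g G') (k : ℕ) : fStrong G k = fStrong G' k :=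
  congrArg sInf <| Set.ext fun _ =>
    ⟨HasStrongForestCover.comap φ.symm, HasStrongForestCover.comap φ⟩

end StrongForests

/-- The vertices of the graph `gadget ι κ`, with `ι` indexing the midpoints of its paths and `κ` its
pendant vertices. -/
inductive GadgetVertex (ι κ : Type*)
  | apex
  | hub
  | top
  | bottom
  | mid (i : ι)
  | leaf (j : κ)

instance {ι κ : Type*} [Finite ι] [Finite κ] : Finite (GadgetVertex ι κ) :=
  Finite.of_surjective (α := Fin 4 ⊕ ι ⊕ κ)
    (Sum.elim ![.apex, .hub, .top, .bottom] (Sum.elim .mid .leaf)) <| by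
      rintro (_ | _ | _ | _ | i | j)
      exacts [⟨.inl 0, rfl⟩, ⟨.inl 1, rfl⟩, ⟨.inl 2, rfl⟩, ⟨.inl 3, rfl⟩, ⟨.inr (.inl i), rfl⟩,
        ⟨.inr (.inr j), rfl⟩]

open GadgetVertex in
/-- The graph of tree-width two that needs many strong forests: a triangle `apex`, `hub`, `top`, a
pendant vertex `leaf j` at `hub` for each `j`, and a path `top`, `mid i`, `bottom` for each `i`.
Only one orientation of each edge is listed; `SimpleGraph.fromRel` symmetrizes. -/
def gadget (ι κ : Type*) : SimpleGraph (GadgetVertex ι κ) :=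
  .fromRel fun
    | apex, hub => True
    | apex, top => True
    | hub, top => True
    | hub, leaf _ => True
    | top, mid _ => True
    | mid _, bottom => True
    | _, _ => False

namespace gadget

open SimpleGraph GadgetVertex

variable {ι κ : Type*} {k : ℕ}

theorem treewidth_eq_two (ι κ : Type) : treewidth (gadget ι κ) = 2 := by
  have hle : HasTreewidthAtMost (gadget ι κ) 2 := by
    refine hasTreewidthAtMost_of_isVertexCover (K := {hub, top, bottom}) ?_
      Finset.card_le_three ?_
    · rintro (_ | _) (_ | _) <;> simp [gadget]
    · rintro (_ | _) <;> simp only [Finset.filter_insert, Finset.filter_singleton] <;>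
        simp [gadget]
  refine le_antisymm (Nat.sInf_le hle) (le_csInf ⟨2, hle⟩ fun t ht => ?_)
  exact HasTreewidthAtMost.two_le_of_triangle ht (a := apex) (b := hub) (c := top)
    (by simp [gadget]) (by simp [gadget]) (by simp [gadget])

theorem isIndepSet_insert_range_leaf {x : GadgetVertex ι κ} (hx : x ≠ hub) :
    (gadget ι κ).IsIndepSet (insert x (Set.range leaf)) := by
  cases x <;> rintro _ (rfl | ⟨i, rfl⟩) _ (rfl | ⟨j, rfl⟩) - <;> simp_all [gadget]

theorem isTree_induce_hub_star {x : GadgetVertex ι κ} (hx : (gadget ι κ).Adj hub x) :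
    ((gadget ι κ).induce (insert hub (insert x (Set.range leaf)))).IsTree := by
  refine isTree_induce_insert_of_isIndepSet (isIndepSet_insert_range_leaf hx.ne') ?_
  rintro _ (rfl | ⟨j, rfl⟩)
  · exact hx
  · simp [gadget]

theorem isTree_induce_hub_star_path (i : ι) :
    ((gadget ι κ).induce
      (insert bottom (insert (mid i) (insert hub (insert top (Set.range leaf)))))).IsTree := by
  refine isTree_induce_insert (isTree_induce_insert (isTree_induce_hub_star ?_) ?_) ?_
  · simp [gadget]
  · exact ⟨top, by simp [gadget], by simp [gadget]⟩
  · exact ⟨mid i, by simp [gadget], by simp [gadget]⟩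

theorem isStrongForest_of_range_leaf_subset [Finite ι] [Fintype κ] (hk : k ≤ Fintype.card κ)
    {S : Set (GadgetVertex ι κ)} (hS : ((gadget ι κ).induce S).IsTree)
    (hsub : insert hub (Set.range leaf) ⊆ S) : IsStrongForest (gadget ι κ) k S := by
  have hstar : (insert hub (Set.range (leaf : κ → GadgetVertex ι κ))).ncard
      = Fintype.card κ + 1 := by
    rw [Set.ncard_insert_of_notMem (by simp), Set.ncard_range_of_injective fun _ _ => leaf.inj,
      Nat.card_eq_fintype_card]
  have hle := Set.ncard_le_ncard hsub (Set.toFinite S)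
  exact .of_isTree hS (by omega)

theorem kValid_hub_apex [Finite ι] [Fintype κ] (hk : k ≤ Fintype.card κ) :
    KValid (gadget ι κ) k s(hub, apex) :=
  ⟨_, isStrongForest_of_range_leaf_subset hk (isTree_induce_hub_star (x := apex) (by simp [gadget]))
    (by grind), by simp [mk_mem_forestEdges_iff, gadget]⟩

theorem kValid_mid_bottom [Finite ι] [Fintype κ] (hk : k ≤ Fintype.card κ) (i : ι) :
    KValid (gadget ι κ) k s(mid i, bottom) :=
  ⟨_, isStrongForest_of_range_leaf_subset hk (isTree_induce_hub_star_path i) (by grind),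
    by simp [mk_mem_forestEdges_iff, gadget]⟩

theorem neighborSet_bottom : (gadget ι κ).neighborSet bottom = Set.range mid := by
  ext (_ | _) <;> simp [gadget]

theorem top_mem_of_bottom_mem [Fintype ι] (hk : Fintype.card ι < k) {S : Set (GadgetVertex ι κ)}
    (hS : IsStrongForest (gadget ι κ) k S) (hbottom : bottom ∈ S) : top ∈ S := by
  have hdeg : ((gadget ι κ).neighborSet bottom).encard < k := by
    rw [neighborSet_bottom, ← Set.image_univ, Function.Injective.encard_image fun _ _ => mid.inj,
      Set.encard_univ, ENat.card_eq_coe_fintype_card]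
    exact mod_cast hk
  obtain ⟨x, -, y, hy, hx, hxy, hne⟩ := hS.exists_adj_adj hbottom hdeg
  cases x <;> cases y <;> simp_all [gadget]

theorem not_isAcyclic_of_hub_apex_top {S : Set (GadgetVertex ι κ)} (hhub : hub ∈ S)
    (hapex : apex ∈ S) (htop : top ∈ S) : ¬ ((gadget ι κ).induce S).IsAcyclic :=
  not_isAcyclic_of_triangle (x := ⟨hub, hhub⟩) (y := ⟨apex, hapex⟩) (z := ⟨top, htop⟩)
    (by simp [gadget]) (by simp [gadget]) (by simp [gadget])

theorem subsingleton_mid_of_isAcyclic {S : Set (GadgetVertex ι κ)}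
    (hS : ((gadget ι κ).induce S).IsAcyclic) (htop : top ∈ S) (hbottom : bottom ∈ S) :
    {i | mid i ∈ S}.Subsingleton := by
  intro i hi j hj
  have hmid := commonNeighbors_subsingleton_of_isAcyclic hS
    (x := ⟨top, htop⟩) (z := ⟨bottom, hbottom⟩) (by simp)
    (show ⟨mid i, hi⟩ ∈ _ by simp [mem_commonNeighbors, gadget])
    (show ⟨mid j, hj⟩ ∈ _ by simp [mem_commonNeighbors, gadget])
  simpa using hmid

theorem card_add_one_le_fStrong [Fintype ι] [Fintype κ] (hι : Fintype.card ι < k)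
    (hκ : k ≤ Fintype.card κ) : Fintype.card ι + 1 ≤ fStrong (gadget ι κ) k := by
  rw [← Fintype.card_option]
  let e : Option ι → Sym2 (GadgetVertex ι κ)
    | none => s(hub, apex)
    | some i => s(mid i, bottom)
  refine card_le_fStrong e ?_ fun S hS => ?_
  · rintro (_ | i)
    exacts [kValid_hub_apex hκ, kValid_mid_bottom hκ i]
  have hdisjoint (hha : e none ∈ forestEdges (gadget ι κ) S) (i : ι) :
      e (some i) ∉ forestEdges (gadget ι κ) S := fun hib => by
    obtain ⟨-, hhub, hapex⟩ := mk_mem_forestEdges_iff.1 hha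
    obtain ⟨-, -, hbottom⟩ := mk_mem_forestEdges_iff.1 hib
    exact not_isAcyclic_of_hub_apex_top hhub hapex (top_mem_of_bottom_mem hι hS hbottom) hS.1
  rintro (_ | i) hi (_ | j) hj
  · rfl
  · exact absurd hj (hdisjoint hi j)
  · exact absurd hi (hdisjoint hj i)
  · obtain ⟨-, hmid, hbottom⟩ := mk_mem_forestEdges_iff.1 hi
    obtain ⟨-, hmid', -⟩ := mk_mem_forestEdges_iff.1 hj
    exact congrArg some <| subsingleton_mid_of_isAcyclic hS.1
      (top_mem_of_bottom_mem hι hS hbottom) hbottom hmid hmid'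

end gadget

/-- For every integer `k ≥ 1` there is a finite simple graph `G` with
tree-width `2` and `f_k(G) ≥ k`. -/
theorem exists_treewidth_two_fStrong_ge (k : ℕ) (hk : 1 ≤ k) :
    ∃ (m : ℕ) (G : SimpleGraph (Fin m)), treewidth G = 2 ∧ k ≤ fStrong G k := by
  let G := gadget (Fin (k - 1)) (Fin k)
  have : Fintype (GadgetVertex (Fin (k - 1)) (Fin k)) := .ofFinite _
  let φ := G.overFinIso rfl
  refine ⟨_, G.overFin rfl, ?_, ?_⟩
  · rw [← treewidth_congr φ, gadget.treewidth_eq_two]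
  · calc k = Fintype.card (Fin (k - 1)) + 1 := by rw [Fintype.card_fin, Nat.sub_add_cancel hk]
      _ ≤ fStrong G k := gadget.card_add_one_le_fStrong (by simp; omega) (by simp)
      _ = fStrong (G.overFin rfl) k := fStrong_congr φ k

end InducedArboricity
end

section
/- For every finite simple graph G of tree-width t ≥ 2, the 2-strong induced arboricity satisfies f_2(G) ≤ 3·C(t+1, 3), where C(t+1,3) is the binomial coefficient (t+1 choose 3). -/
open scoped Classical

namespace InducedArboricity

/-!
A tree decomposition of width `t` yields a coloring with `t + 1` colors in which any `k + 1`
color classes together induce a graph of tree-width at most `k`. An edge `uv` lying in a 2-strong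
forest has a vertex `w` adjacent to exactly one of `u` and `v`, and three classes containing `u`,
`v` and `w` induce a graph of tree-width at most 2. So it suffices to cover, in a graph of
tree-width at most 2, the edges whose endpoints are not twins by three 2-strong forests.

Such a graph has a 3-coloring with any two classes inducing a forest, in which every bichromatic
edge with non-twin endpoints extends to a two-edge path within its two colors. If every edge lies
in a triangle, any acyclic 3-coloring will do; otherwise one contracts an edge in no triangle and
pulls a coloring back. The pullback can fail only if the contraction creates twins, in which case
the edge lies on a 4-cycle; if this happens for every edge in no triangle, excluding a `K₄` minor
shows that some such 4-cycle is a whole component, which is colored by hand.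
-/

section Acyclic

variable {V : Type*} {G : SimpleGraph V}

lemma exists_subsingleton_neighborSet [Finite V] [Nonempty V] (hG : G.IsAcyclic) :
    ∃ v, (G.neighborSet v).Subsingleton := by
  obtain ⟨v, _, p, hp, hmax⟩ := SimpleGraph.Walk.exists_isPath_forall_isPath_length_le_length G
  have eq_snd (w : V) (hvw : G.Adj v w) : w = p.snd :=
    hG.eq_snd_of_adj_start hp hvw <| by
      by_contra hw
      have := hmax _ _ _ (hp.cons hw (h := hvw.symm))
      simp at this
  exact ⟨v, fun x hx y hy ↦ (eq_snd x hx).trans (eq_snd y hy).symm⟩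

lemma exists_subsingleton_neighborSet_inter {X : Finset V} (hX : X.Nonempty)
    (hGX : (G.induce (X : Set V)).IsAcyclic) :
    ∃ x ∈ X, (G.neighborSet x ∩ X).Subsingleton := by
  have : Nonempty X := hX.coe_sort
  obtain ⟨x, hx⟩ := exists_subsingleton_neighborSet hGX
  refine ⟨x, x.2, fun a ha b hb ↦ ?_⟩
  exact congrArg Subtype.val (@hx ⟨a, ha.2⟩ ha.1 ⟨b, hb.2⟩ hb.1)

lemma isAcyclic_iff_exists_subsingleton_neighborSet_inter :
    G.IsAcyclic ↔
      ∀ X : Finset V, X.Nonempty → ∃ x ∈ X, (G.neighborSet x ∩ X).Subsingleton := by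
  refine ⟨fun hG X hX ↦ exists_subsingleton_neighborSet_inter hX (hG.induce _),
    fun h v p hp ↦ ?_⟩
  obtain ⟨x, hx, hsub⟩ := h p.support.toFinset ⟨v, by simp⟩
  rw [List.mem_toFinset] at hx
  have hq := hp.rotate hx
  have mem_support (n : ℕ) : (p.rotate x hx).getVert n ∈ p.support.toFinset := by
    rw [List.mem_toFinset, ← SimpleGraph.Walk.mem_support_rotate_iff p x hx]
    exact SimpleGraph.Walk.getVert_mem_support _ n
  exact hq.snd_ne_penultimate <| hsub ⟨(p.rotate x hx).adj_snd hq.not_nil, mem_support _⟩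
    ⟨((p.rotate x hx).adj_penultimate hq.not_nil).symm, mem_support _⟩

lemma isAcyclic_induce_iff_exists_subsingleton_neighborSet_inter {S : Set V} :
    (G.induce S).IsAcyclic ↔
      ∀ X : Finset V, X.Nonempty → ↑X ⊆ S → ∃ x ∈ X, (G.neighborSet x ∩ X).Subsingleton := by
  refine ⟨fun hS X hX hXS ↦ exists_subsingleton_neighborSet_inter hX <|
    hS.comap (G.induceHomOfLE hXS).toHom (Set.inclusion_injective hXS), fun h ↦ ?_⟩
  refine isAcyclic_iff_exists_subsingleton_neighborSet_inter.mpr fun X hX ↦ ?_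
  obtain ⟨x, hx, hsub⟩ := h (X.image Subtype.val) (hX.image _) (by simp)
  obtain ⟨x, hxX, rfl⟩ := Finset.mem_image.mp hx
  exact ⟨x, hxX, fun a ha b hb ↦ Subtype.ext <| hsub
    ⟨ha.1, Finset.mem_image_of_mem _ ha.2⟩ ⟨hb.1, Finset.mem_image_of_mem _ hb.2⟩⟩

end Acyclic

section TreeDecomposition

variable {V ι : Type*} {G : SimpleGraph V} {T : SimpleGraph ι} {B : ι → Finset V} {t : ℕ}

lemma dist_lt_of_mem_support_tail {r i x : ι} {q : T.Walk i r} (hq : q.IsPath)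
    (hlen : q.length = T.dist i r) (hx : x ∈ q.support.tail) : T.dist x r < T.dist i r := by
  have hxi : x ≠ i := by
    rintro rfl
    have := hq.support_nodup
    rw [← q.cons_tail_support, List.nodup_cons] at this
    exact this.1 hx
  calc T.dist x r ≤ (q.dropUntil x (List.mem_of_mem_tail hx)).length := SimpleGraph.dist_le _
    _ < q.length := SimpleGraph.Walk.length_dropUntil_lt_length _ hxi
    _ = T.dist i r := hlen

lemma exists_isPath_of_induce_connected {s : Set ι} (hs : (T.induce s).Connected) {i j : ι}
    (hi : i ∈ s) (hj : j ∈ s) : ∃ p : T.Walk i j, p.IsPath ∧ ∀ x ∈ p.support, x ∈ s := by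
  obtain ⟨p, hp⟩ := hs.exists_isPath ⟨i, hi⟩ ⟨j, hj⟩
  refine ⟨p.map (SimpleGraph.Embedding.induce s).toHom,
    hp.map (SimpleGraph.Embedding.induce (G := T) s).injective, fun x hx ↦ ?_⟩
  obtain ⟨y, -, rfl⟩ := List.mem_map.mp (p.support_map _ ▸ hx)
  exact y.2

/- The path runs inside `s` up to the node `i` of `s` closest to `r`, then follows a geodesic. -/
lemma exists_gate (hT : T.IsTree) {s : Set ι} (hs : (T.induce s).Connected) (r : ι) :
    ∃ i ∈ s, ∀ j ∈ s, ∀ p : T.Walk j r, p.IsPath →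
      i ∈ p.support ∧ ∀ x ∈ p.support, x ∈ s ∨ T.dist x r < T.dist i r := by
  have hne : s.Nonempty := Set.nonempty_coe_sort.mp hs.nonempty
  obtain ⟨i, hi, hmin⟩ : ∃ i ∈ s, ∀ j ∈ s, T.dist i r ≤ T.dist j r :=
    ⟨_, Function.argminOn_mem (T.dist · r) s hne, fun j hj ↦ Function.argminOn_le (T.dist · r) s hj⟩
  refine ⟨i, hi, fun j hj p' hp' ↦ ?_⟩
  obtain ⟨p, hp, hps⟩ := exists_isPath_of_induce_connected hs hj hi
  obtain ⟨q, hq, hlen⟩ := hT.connected.exists_path_of_dist i r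
  have hpq : (p.append q).IsPath := by
    rw [SimpleGraph.Walk.isPath_def, SimpleGraph.Walk.support_append, List.nodup_append']
    refine ⟨hp.support_nodup, hq.support_nodup.tail, fun x hxp hxq ↦ ?_⟩
    exact (hmin x (hps x hxp)).not_gt (dist_lt_of_mem_support_tail hq hlen hxq)
  obtain rfl : p' = p.append q := (hT.existsUnique_path j r).unique hp' hpq
  rw [SimpleGraph.Walk.support_append]
  refine ⟨List.mem_append_left _ p.end_mem_support, fun x hx ↦ ?_⟩
  exact (List.mem_append.mp hx).imp (hps x) (dist_lt_of_mem_support_tail hq hlen)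

/-- `T` and the bags `B` form a tree decomposition of `G`: the edge condition of
`HasTreewidthAtMost` is phrased with endpoints, and the width is left free. -/
structure IsTreeDecomposition (G : SimpleGraph V) (T : SimpleGraph ι) (B : ι → Finset V) :
    Prop where
  isTree : T.IsTree
  exists_mem_bag_of_adj : ∀ u v, G.Adj u v → ∃ i, u ∈ B i ∧ v ∈ B i
  connected : ∀ v, (T.induce {i | v ∈ B i}).Connected

lemma hasTreewidthAtMost_iff {V : Type*} {G : SimpleGraph V} {t : ℕ} :
    HasTreewidthAtMost G t ↔ ∃ (ι : Type) (T : SimpleGraph ι) (B : ι → Finset V),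
      IsTreeDecomposition G T B ∧ ∀ i, (B i).card ≤ t + 1 := by
  constructor
  · rintro ⟨ι, T, B, hT, hedge, hconn, hcard⟩
    exact ⟨ι, T, B, ⟨hT, fun u v huv ↦ by simpa using hedge s(u, v) huv, hconn⟩, hcard⟩
  · rintro ⟨ι, T, B, h, hcard⟩
    refine ⟨ι, T, B, h.isTree, Sym2.ind fun u v huv ↦ ?_, h.connected, hcard⟩
    simpa using h.exists_mem_bag_of_adj u v huv

/- Take the vertex of `S` whose gate is farthest from the root. -/
lemma IsTreeDecomposition.exists_simplicial (h : IsTreeDecomposition G T B) {S : Finset V}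
    (hS : S.Nonempty) :
    ∃ v ∈ S, ∃ i, v ∈ B i ∧ ∀ u ∈ S, ∀ j, u ∈ B j → v ∈ B j → u ∈ B i := by
  obtain ⟨r⟩ := h.isTree.connected.nonempty
  choose gate mem_gate hgate using fun v ↦ exists_gate h.isTree (h.connected v) r
  obtain ⟨v, hv, hmax⟩ := S.exists_max_image (fun v ↦ T.dist (gate v) r) hS
  refine ⟨v, hv, gate v, mem_gate v, fun u hu j huj hvj ↦ ?_⟩
  obtain ⟨p, hp⟩ := h.isTree.connected.exists_isPath j r
  exact ((hgate u j huj p hp).2 _ (hgate v j hvj p hp).1).resolve_right (hmax u hu).not_gt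

end TreeDecomposition

section Coloring

variable {V : Type*}

lemma colorable_of_forall_exists_card_lt [Finite V] {H : SimpleGraph V}
    [DecidableRel H.Adj] {n : ℕ}
    (h : ∀ S : Finset V, S.Nonempty → ∃ v ∈ S, {u ∈ S | H.Adj v u}.card < n) :
    H.Colorable n := by
  have := Fintype.ofFinite V
  suffices key : ∀ S : Finset V, ∃ c : V → ℕ,
      ∀ x ∈ S, c x < n ∧ ∀ y ∈ S, H.Adj x y → c x ≠ c y by
    obtain ⟨c, hc⟩ := key Finset.univ
    exact ⟨SimpleGraph.Coloring.mk (fun v ↦ ⟨c v, (hc v (Finset.mem_univ v)).1⟩) fun {x y} hxy ↦ by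
      simpa using (hc x (Finset.mem_univ x)).2 y (Finset.mem_univ y) hxy⟩
  intro S
  induction S using Finset.strongInduction with | H S ih => ?_
  obtain rfl | hS := S.eq_empty_or_nonempty
  · exact ⟨fun _ ↦ 0, by simp⟩
  obtain ⟨v, hv, hcard⟩ := h S hS
  obtain ⟨c, hc⟩ := ih (S.erase v) (Finset.erase_ssubset hv)
  obtain ⟨k, hkn, hk⟩ : ∃ k ∈ Finset.range n, k ∉ {u ∈ S | H.Adj v u}.image c :=
    Finset.exists_mem_notMem_of_card_lt_card <| by
      simpa using Finset.card_image_le.trans_lt hcard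
  have hcol (u : V) (hu : u ∈ S) (hvu : H.Adj v u) : c u ≠ k := fun huk ↦
    hk (Finset.mem_image.mpr ⟨u, Finset.mem_filter.mpr ⟨hu, hvu⟩, huk⟩)
  refine ⟨Function.update c v k, fun x hx ↦ ?_⟩
  simp only [Finset.mem_erase, Finset.mem_range] at hc hkn
  grind [Function.update_apply, SimpleGraph.irrefl, SimpleGraph.adj_comm]

variable {ι : Type*} {G : SimpleGraph V} {T : SimpleGraph ι} {B : ι → Finset V} {n t : ℕ}

lemma IsTreeDecomposition.exists_injOn_bag [Finite V] (h : IsTreeDecomposition G T B)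
    (hcard : ∀ i, (B i).card ≤ n) : ∃ c : V → Fin n, ∀ i, Set.InjOn c (B i) := by
  let H : SimpleGraph V := .fromRel fun u v ↦ ∃ i, u ∈ B i ∧ v ∈ B i
  have hH (S : Finset V) (hS : S.Nonempty) : ∃ v ∈ S, {u ∈ S | H.Adj v u}.card < n := by
    obtain ⟨v, hv, i, hvi, hi⟩ := h.exists_simplicial hS
    have hsub : {u ∈ S | H.Adj v u} ⊆ (B i).erase v := by
      intro u hu
      obtain ⟨huS, hne, hbag⟩ := Finset.mem_filter.mp hu
      refine Finset.mem_erase.mpr ⟨hne.symm, ?_⟩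
      obtain ⟨j, hvj, huj⟩ | ⟨j, huj, hvj⟩ := hbag <;> exact hi u huS j huj hvj
    exact ⟨v, hv, (Finset.card_le_card hsub).trans_lt <|
      (Finset.card_erase_lt_of_mem hvi).trans_le (hcard i)⟩
  obtain ⟨c⟩ := colorable_of_forall_exists_card_lt hH
  refine ⟨c, fun i x hx y hy hxy ↦ ?_⟩
  by_contra hne
  exact c.valid (v := x) (w := y) ⟨hne, .inl ⟨i, hx, hy⟩⟩ hxy

lemma IsTreeDecomposition.induce (h : IsTreeDecomposition G T B) (S : Set V) :
    IsTreeDecomposition (G.induce S) T fun i ↦ (B i).subtype (· ∈ S) where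
  isTree := h.isTree
  exists_mem_bag_of_adj u v huv := by simpa using h.exists_mem_bag_of_adj u v huv
  connected v := by
    have hv : {i | v ∈ (B i).subtype (· ∈ S)} = {i | v.1 ∈ B i} := by simp
    exact hv ▸ h.connected v

lemma HasTreewidthAtMost.induce (h : HasTreewidthAtMost G t) (S : Set V) :
    HasTreewidthAtMost (G.induce S) t := by
  obtain ⟨ι, T, B, hTB, hcard⟩ := hasTreewidthAtMost_iff.mp h
  refine hasTreewidthAtMost_iff.mpr ⟨ι, T, _, hTB.induce S, fun i ↦ ?_⟩
  rw [Finset.card_subtype]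
  exact (Finset.card_filter_le _ _).trans (hcard i)

/-- A coloring of a graph of tree-width `t` with `t + 1` colors in which any `k + 1` color
classes together induce a graph of tree-width at most `k`. -/
def IsLowTreewidthColoring {m : ℕ} (G : SimpleGraph V) (c : V → Fin m) : Prop :=
  ∀ (A : Finset (Fin m)) (k : ℕ), A.card ≤ k + 1 → HasTreewidthAtMost (G.induce {v | c v ∈ A}) k

lemma HasTreewidthAtMost.exists_isLowTreewidthColoring [Finite V] (h : HasTreewidthAtMost G t) :
    ∃ c : V → Fin (t + 1), IsLowTreewidthColoring G c := by
  obtain ⟨ι, T, B, hTB, hcard⟩ := hasTreewidthAtMost_iff.mp h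
  obtain ⟨c, hc⟩ := hTB.exists_injOn_bag hcard
  refine ⟨c, fun A k hA ↦ hasTreewidthAtMost_iff.mpr ⟨ι, T, _, hTB.induce _, fun i ↦ ?_⟩⟩
  refine (Finset.card_le_card_of_injOn (fun v ↦ c v.1) (fun v _ ↦ v.2)
    fun x hx y hy hxy ↦ ?_).trans hA
  exact Subtype.ext (hc i (by simpa using hx) (by simpa using hy) hxy)

lemma HasTreewidthAtMost.cliqueFree (h : HasTreewidthAtMost G t) : G.CliqueFree (t + 2) := by
  obtain ⟨ι, T, B, hTB, hcard⟩ := hasTreewidthAtMost_iff.mp h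
  intro K hK
  obtain ⟨v, hv, i, hvi, hi⟩ := hTB.exists_simplicial (S := K)
    (Finset.card_pos.mp (by rw [hK.card_eq]; lia))
  have hKB : K ⊆ B i := fun u hu ↦ by
    obtain rfl | huv := eq_or_ne u v
    · exact hvi
    · obtain ⟨j, huj, hvj⟩ := hTB.exists_mem_bag_of_adj u v (hK.isClique hu hv huv)
      exact hi u hu j huj hvj
  have := (Finset.card_le_card hKB).trans (hcard i)
  rw [hK.card_eq] at this
  lia

lemma HasTreewidthAtMost.eq_bot (h : HasTreewidthAtMost G 0) : G = ⊥ :=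
  SimpleGraph.cliqueFree_two.mp h.cliqueFree

lemma HasTreewidthAtMost.isAcyclic (h : HasTreewidthAtMost G 1) : G.IsAcyclic := by
  obtain ⟨ι, T, B, hTB, hcard⟩ := hasTreewidthAtMost_iff.mp h
  refine isAcyclic_iff_exists_subsingleton_neighborSet_inter.mpr fun X hX ↦ ?_
  obtain ⟨v, hv, i, hvi, hi⟩ := hTB.exists_simplicial hX
  have mem_erase (a : V) (ha : a ∈ G.neighborSet v ∩ X) : a ∈ (B i).erase v := by
    obtain ⟨j, hvj, haj⟩ := hTB.exists_mem_bag_of_adj v a ha.1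
    exact Finset.mem_erase.mpr ⟨G.ne_of_adj ha.1 |>.symm, hi a ha.2 j haj hvj⟩
  have hle : ((B i).erase v).card ≤ 1 := by
    rw [Finset.card_erase_of_mem hvi]
    exact Nat.sub_le_of_le_add (hcard i)
  exact ⟨v, hv, fun a ha b hb ↦
    Finset.card_le_one.mp hle a (mem_erase a ha) b (mem_erase b hb)⟩

lemma IsLowTreewidthColoring.isAcyclicColoring {m : ℕ} {c : V → Fin m}
    (hc : IsLowTreewidthColoring G c) : IsAcyclicColoring G c := by
  refine ⟨fun u v huv huv' ↦ ?_, fun i j ↦ ?_⟩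
  · have hbot := (hc {c v} 0 le_rfl).eq_bot
    have : (G.induce {x | c x ∈ ({c v} : Finset _)}).Adj ⟨u, by simpa⟩ ⟨v, by simp⟩ := huv
    simp [hbot] at this
  · have hij : {v | c v = i ∨ c v = j} = {v | c v ∈ ({i, j} : Finset _)} := by simp
    exact hij ▸ (hc {i, j} 1 Finset.card_le_two).isAcyclic

end Coloring

section Contraction

variable {V W ι : Type*} {G : SimpleGraph V} {T : SimpleGraph ι} {B : ι → Finset V} {t : ℕ}
  {f : V → W} {u v : V}

lemma IsTreeDecomposition.connected_of_induce_connected (h : IsTreeDecomposition G T B)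
    {S : Set V} (hS : (G.induce S).Connected) :
    (T.induce {i | ∃ x ∈ S, x ∈ B i}).Connected := by
  let U : Set ι := {i | ∃ x ∈ S, x ∈ B i}
  have reachable_of_mem (x : S) (i j : U) (hi : x.1 ∈ B i) (hj : x.1 ∈ B j) :
      (T.induce U).Reachable i j := by
    have hU : {i | x.1 ∈ B i} ⊆ U := fun i hi ↦ ⟨x, x.2, hi⟩
    have hij := (h.connected x).preconnected ⟨i, hi⟩ ⟨j, hj⟩
    exact hij.map (T.induceHomOfLE hU).toHom
  have reachable_of_walk {x y : S} (p : (G.induce S).Walk x y) :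
      ∀ i j : U, x.1 ∈ B i → y.1 ∈ B j → (T.induce U).Reachable i j := by
    induction p with
    | nil => exact reachable_of_mem _
    | @cons x y _ hxy _ ih =>
      intro i j hi hj
      obtain ⟨k, hxk, hyk⟩ := h.exists_mem_bag_of_adj x y hxy
      exact (reachable_of_mem x i ⟨k, x, x.2, hxk⟩ hi hxk).trans (ih _ j hyk hj)
  obtain ⟨x⟩ := hS.nonempty
  obtain ⟨i, hi⟩ := (h.connected x).nonempty
  have : Nonempty U := ⟨i, x, x.2, hi⟩
  refine ⟨fun i j ↦ ?_⟩
  obtain ⟨x, hxS, hxi⟩ := i.2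
  obtain ⟨y, hyS, hyj⟩ := j.2
  obtain ⟨p⟩ := hS.preconnected ⟨x, hxS⟩ ⟨y, hyS⟩
  exact reachable_of_walk p i j hxi hyj

lemma IsTreeDecomposition.map (h : IsTreeDecomposition G T B)
    (hf : ∀ w, (G.induce (f ⁻¹' {w})).Connected) :
    IsTreeDecomposition (G.map f) T fun i ↦ (B i).image f where
  isTree := h.isTree
  exists_mem_bag_of_adj := by
    rintro _ _ ⟨-, x, y, hxy, rfl, rfl⟩
    obtain ⟨i, hx, hy⟩ := h.exists_mem_bag_of_adj x y hxy
    exact ⟨i, Finset.mem_image_of_mem f hx, Finset.mem_image_of_mem f hy⟩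
  connected w := by
    have hw : {i | w ∈ (B i).image f} = {i | ∃ x ∈ f ⁻¹' {w}, x ∈ B i} := by
      ext i
      simp [and_comm]
    exact hw ▸ h.connected_of_induce_connected (hf w)

lemma HasTreewidthAtMost.map (h : HasTreewidthAtMost G t)
    (hf : ∀ w, (G.induce (f ⁻¹' {w})).Connected) : HasTreewidthAtMost (G.map f) t := by
  obtain ⟨ι, T, B, hTB, hcard⟩ := hasTreewidthAtMost_iff.mp h
  exact hasTreewidthAtMost_iff.mpr
    ⟨ι, T, _, hTB.map hf, fun i ↦ Finset.card_image_le.trans (hcard i)⟩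

/-- The map `f` contracts the edge `uv` of `G` and is injective otherwise; the contracted graph is
`G.map f`. -/
structure IsEdgeContraction (G : SimpleGraph V) (u v : V) (f : V → W) : Prop where
  adj : G.Adj u v
  surjective : Function.Surjective f
  apply_eq_iff : ∀ x y, f x = f y ↔ x = y ∨ x = u ∧ y = v ∨ x = v ∧ y = u

lemma exists_isEdgeContraction {V : Type*} {G : SimpleGraph V} {u v : V} (h : G.Adj u v) :
    ∃ f : V → {x // x ≠ v}, IsEdgeContraction G u v f := by
  refine ⟨fun x ↦ if hx : x = v then ⟨u, h.ne⟩ else ⟨x, hx⟩, h, fun x ↦ ⟨x, by simp [x.2]⟩,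
    fun x y ↦ ?_⟩
  have := h.ne
  split_ifs <;> grind

namespace IsEdgeContraction

lemma apply_eq_apply (hf : IsEdgeContraction G u v f) : f u = f v :=
  (hf.apply_eq_iff u v).mpr (by simp)

lemma preimage_connected (hf : IsEdgeContraction G u v f) (w : W) :
    (G.induce (f ⁻¹' {w})).Connected := by
  obtain ⟨x, rfl⟩ := hf.surjective w
  by_cases hx : x = u ∨ x = v
  · have : f ⁻¹' {f x} = {u, v} := by
      ext y
      simp only [Set.mem_preimage, Set.mem_singleton_iff, Set.mem_insert_iff, hf.apply_eq_iff]
      grind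
    exact this ▸ SimpleGraph.induce_pair_connected_of_adj hf.adj
  · have : f ⁻¹' {f x} = {x} := by
      ext y
      simp only [Set.mem_preimage, Set.mem_singleton_iff, hf.apply_eq_iff]
      grind
    rw [this]
    exact ⟨SimpleGraph.Preconnected.of_subsingleton⟩

lemma hasTreewidthAtMost (hf : IsEdgeContraction G u v f) (h : HasTreewidthAtMost G t) :
    HasTreewidthAtMost (G.map f) t :=
  h.map hf.preimage_connected

lemma map_adj_apply (hf : IsEdgeContraction G u v f) {x y : V} (hxy : G.Adj x y)
    (hne : s(x, y) ≠ s(u, v)) : (G.map f).Adj (f x) (f y) := by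
  refine SimpleGraph.map_adj_apply' hxy fun h ↦ ?_
  have := hxy.ne
  grind [hf.apply_eq_iff x y]

end IsEdgeContraction

/- Contracting the edge `rm` produces a `K₄`. -/
lemma HasTreewidthAtMost.not_adj_of_subdivided_K4 (h : HasTreewidthAtMost G 2) {p q r s m : V}
    (hpq : G.Adj p q) (hpr : G.Adj p r) (hps : G.Adj p s) (hqr : G.Adj q r) (hqs : G.Adj q s)
    (hrm : G.Adj r m) (hpm : p ≠ m) (hqm : q ≠ m) (hrs : r ≠ s) : ¬ G.Adj m s := by
  intro hms
  obtain ⟨f, hf⟩ := exists_isEdgeContraction hrm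
  have hrs' : (G.map f).Adj (f r) (f s) :=
    hf.apply_eq_apply ▸ hf.map_adj_apply hms (by simp [hrs.symm, hms.ne'])
  have hclique : (G.map f).IsNClique 4 {f p, f q, f r, f s} :=
    ((SimpleGraph.is3Clique_triple_iff.mpr
      ⟨hf.map_adj_apply hqr (by simp [hqr.ne, hqm]), hf.map_adj_apply hqs (by simp [hqr.ne, hqm]),
        hrs'⟩).insert (a := f p) (by
      simp only [Finset.mem_insert, Finset.mem_singleton, forall_eq_or_imp, forall_eq]
      exact ⟨hf.map_adj_apply hpq (by simp [hpr.ne, hpm]),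
        hf.map_adj_apply hpr (by simp [hpr.ne, hpm]),
        hf.map_adj_apply hps (by simp [hpr.ne, hpm])⟩))
  exact hclique.not_cliqueFree (hf.hasTreewidthAtMost h).cliqueFree

end Contraction

section GoodColoring

variable {V W : Type*} {G : SimpleGraph V} {u v a b : V}

lemma mem_closedNbr {x : V} : x ∈ closedNbr G v ↔ x = v ∨ G.Adj v x := Iff.rfl

lemma exists_adj_of_closedNbr_ne (huv : G.Adj u v) (h : closedNbr G u ≠ closedNbr G v) :
    ∃ w, w ≠ u ∧ w ≠ v ∧ (G.Adj u w ∧ ¬ G.Adj v w ∨ G.Adj v w ∧ ¬ G.Adj u w) := by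
  obtain ⟨w, hw⟩ := not_forall.mp fun h' ↦ h (Set.ext h')
  simp only [mem_closedNbr] at hw
  have := huv.symm
  exact ⟨w, by grind, by grind, by grind⟩

/-- A 3-coloring in which any two color classes induce a forest, such that every bichromatic edge
whose endpoints are not twins has an adjacent edge in its two-colored forest. -/
structure IsGoodColoring (G : SimpleGraph V) (c : V → Fin 3) : Prop where
  isAcyclic : ∀ k, (G.induce {v | c v ≠ k}).IsAcyclic
  exists_adj : ∀ u v, G.Adj u v → c u ≠ c v → closedNbr G u ≠ closedNbr G v →
    ∃ w, w ≠ u ∧ w ≠ v ∧ (c w = c u ∨ c w = c v) ∧ (G.Adj u w ∨ G.Adj v w)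

lemma IsAcyclicColoring.isGoodColoring {c : V → Fin 3} (hc : IsAcyclicColoring G c)
    (htri : ∀ u v, G.Adj u v → ∃ w, G.Adj u w ∧ G.Adj v w) : IsGoodColoring G c := by
  refine ⟨fun k ↦ ?_, fun u v huv hne hnbr ↦ ?_⟩
  · obtain ⟨i, j, hij⟩ : ∃ i j, ∀ l, l ≠ k ↔ l = i ∨ l = j := by
      revert k
      decide
    have hset : {v | c v = i ∨ c v = j} = {v | c v ≠ k} := Set.ext fun v ↦ (hij (c v)).symm
    exact hset ▸ hc.2 i j
  · have extend {p q w : V} (hpq : c p ≠ c q) (hpw : G.Adj p w) (hqw : ¬ G.Adj q w)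
        (hwq : w ≠ q) : ∃ x, x ≠ p ∧ x ≠ q ∧ c x = c q ∧ G.Adj p x := by
      by_cases hw : c w = c q
      · exact ⟨w, hpw.ne', hwq, hw, hpw⟩
      · obtain ⟨x, hpx, hwx⟩ := htri p w hpw
        refine ⟨x, hpx.ne', fun h ↦ hqw (h ▸ hwx.symm), ?_, hpx⟩
        have := hc.1 _ _ hpx
        have := hc.1 _ _ hwx
        have := hc.1 _ _ hpw
        lia
    obtain ⟨w, hwu, hwv, ⟨huw, hvw⟩ | ⟨hvw, huw⟩⟩ := exists_adj_of_closedNbr_ne huv hnbr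
    · obtain ⟨x, hxu, hxv, hcx, hux⟩ := extend hne huw hvw hwv
      exact ⟨x, hxu, hxv, .inr hcx, .inl hux⟩
    · obtain ⟨x, hxv, hxu, hcx, hvx⟩ := extend hne.symm hvw huw hwu
      exact ⟨x, hxu, hxv, .inl hcx, .inr hvx⟩

lemma IsGoodColoring.of_forall_induce {c : V → Fin 3}
    (h : ∀ x, ∃ S : Set V, x ∈ S ∧ (∀ y ∈ S, ∀ z, G.Adj y z → z ∈ S) ∧
      IsGoodColoring (G.induce S) fun y ↦ c y) : IsGoodColoring G c := by
  refine ⟨fun k ↦ ?_, fun u v huv hne hnbr ↦ ?_⟩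
  · refine isAcyclic_induce_iff_exists_subsingleton_neighborSet_inter.mpr fun X ⟨x, hx⟩ hXk ↦ ?_
    obtain ⟨S, hxS, hS, hc⟩ := h x
    obtain ⟨y, hy, hsub⟩ := isAcyclic_induce_iff_exists_subsingleton_neighborSet_inter.mp
      (hc.isAcyclic k) (X.subtype (· ∈ S)) ⟨⟨x, hxS⟩, by simpa⟩ fun y hy ↦ hXk (by simpa using hy)
    have mem_inter {a : V} (ha : a ∈ G.neighborSet y ∩ X) :
        ∃ haS : a ∈ S, ⟨a, haS⟩ ∈ (G.induce S).neighborSet y ∩ X.subtype (· ∈ S) :=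
      ⟨hS y y.2 a ha.1, ha.1, by simpa using ha.2⟩
    refine ⟨y, Finset.mem_subtype.mp hy, fun a ha b hb ↦ ?_⟩
    exact congrArg Subtype.val (hsub (mem_inter ha).2 (mem_inter hb).2)
  · obtain ⟨S, huS, hS, hc⟩ := h u
    have hvS := hS u huS v huv
    have hnbr' : closedNbr (G.induce S) ⟨u, huS⟩ ≠ closedNbr (G.induce S) ⟨v, hvS⟩ := by
      obtain ⟨w, hwu, hwv, hw⟩ := exists_adj_of_closedNbr_ne huv hnbr
      have hwS : w ∈ S := hw.elim (fun hw ↦ hS u huS w hw.1) (fun hw ↦ hS v hvS w hw.1)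
      intro heq
      have := Set.ext_iff.mp heq ⟨w, hwS⟩
      simp only [mem_closedNbr, Subtype.mk.injEq, SimpleGraph.comap_adj,
        Function.Embedding.subtype_apply] at this
      grind
    obtain ⟨w, hwu, hwv, hw⟩ := hc.exists_adj ⟨u, huS⟩ ⟨v, hvS⟩ huv hne hnbr'
    exact ⟨w, fun h ↦ hwu (Subtype.ext h), fun h ↦ hwv (Subtype.ext h), hw⟩

lemma exists_isGoodColoring_of_induce {S : Set V} (hS : ∀ x y, G.Adj x y → (x ∈ S ↔ y ∈ S))
    (h : ∃ c, IsGoodColoring (G.induce S) c) (h' : ∃ c, IsGoodColoring (G.induce Sᶜ) c) :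
    ∃ c, IsGoodColoring G c := by
  obtain ⟨c, hc⟩ := h
  obtain ⟨c', hc'⟩ := h'
  refine ⟨fun x ↦ if hx : x ∈ S then c ⟨x, hx⟩ else c' ⟨x, hx⟩, .of_forall_induce fun x ↦ ?_⟩
  by_cases hx : x ∈ S
  · refine ⟨S, hx, fun y hy z hyz ↦ (hS y z hyz).mp hy, ?_⟩
    simpa using hc
  · refine ⟨Sᶜ, hx, fun y hy z hyz ↦ mt (hS y z hyz).mpr hy, ?_⟩
    convert hc' with y
    exact dif_neg y.2

/-- An edge `uv` in no triangle, lying on an induced 4-cycle `u v b a` such that `a` and `b` are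
twins outside of it. Exactly then does contracting `uv` turn the edge `ab` into one between
twins. -/
structure IsRung (G : SimpleGraph V) (u v a b : V) : Prop where
  adj_uv : G.Adj u v
  adj_ua : G.Adj u a
  adj_vb : G.Adj v b
  adj_ab : G.Adj a b
  ne_ub : u ≠ b
  ne_va : v ≠ a
  not_adj_of_adj : ∀ x, G.Adj u x → ¬ G.Adj v x
  adj_iff_adj : ∀ x, x ≠ u → x ≠ v → x ≠ a → x ≠ b → (G.Adj a x ↔ G.Adj b x)

end GoodColoring

section Uncontraction

variable {V W : Type*} {G : SimpleGraph V} {f : V → W} {u v : V} {c : W → Fin 3}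

namespace IsEdgeContraction

lemma eq_of_apply_eq_of_adj (hf : IsEdgeContraction G u v f)
    (htri : ∀ x, G.Adj u x → ¬ G.Adj v x) {x a b : V} (hab : f a = f b) (hxa : G.Adj x a)
    (hxb : G.Adj x b) : a = b := by
  obtain h | ⟨rfl, rfl⟩ | ⟨rfl, rfl⟩ := (hf.apply_eq_iff a b).mp hab
  · exact h
  · exact absurd hxb.symm (htri x hxa.symm)
  · exact absurd hxa.symm (htri x hxb.symm)

/- If every vertex of `X` has two neighbours in `X`, then so has every vertex of `f '' X` in the
contracted graph: the merged vertex inherits a neighbour from each of `u` and `v`. -/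
lemma isAcyclic_induce_preimage (hf : IsEdgeContraction G u v f)
    (htri : ∀ x, G.Adj u x → ¬ G.Adj v x) {S : Set W} (hS : ((G.map f).induce S).IsAcyclic) :
    (G.induce (f ⁻¹' S)).IsAcyclic := by
  rw [isAcyclic_induce_iff_exists_subsingleton_neighborSet_inter] at hS ⊢
  intro X hX hXS
  obtain ⟨_, hy, hsub⟩ := hS (X.image f) (hX.image f) (by simpa using hXS)
  obtain ⟨x, hx, rfl⟩ := Finset.mem_image.mp hy
  have apply_eq {x' a b : V} (hx' : f x' = f x) (ha : G.Adj x a ∧ a ∈ X) (hb : G.Adj x' b ∧ b ∈ X)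
      (hxa : s(x, a) ≠ s(u, v)) (hxb : s(x', b) ≠ s(u, v)) : f a = f b :=
    hsub ⟨hf.map_adj_apply ha.1 hxa, Finset.mem_image_of_mem f ha.2⟩
      ⟨hx' ▸ hf.map_adj_apply hb.1 hxb, Finset.mem_image_of_mem f hb.2⟩
  by_cases hpartner : ∃ z, s(x, z) = s(u, v) ∧ z ∈ X
  · obtain ⟨z, hz, hzX⟩ := hpartner
    have htri' (y : V) (hxy : G.Adj x y) : ¬ G.Adj z y := by
      obtain ⟨rfl, rfl⟩ | ⟨rfl, rfl⟩ := Sym2.eq_iff.mp hz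
      exacts [htri y hxy, fun hzy ↦ htri y hzy hxy]
    have apply_eq_apply : f z = f x := by grind [hf.apply_eq_iff z x]
    by_cases hxX : (G.neighborSet x ∩ X).Subsingleton
    · exact ⟨x, hx, hxX⟩
    obtain ⟨b, hb, hbz⟩ := (Set.not_subsingleton_iff.mp hxX).exists_ne z
    have eq_x (a : V) (ha : a ∈ G.neighborSet z ∩ X) : a = x := by
      by_contra hax
      have hba := apply_eq apply_eq_apply hb ha (by grind) (by grind)
      have hab : b ≠ a := fun h ↦ htri' b hb.1 (h ▸ ha.1)
      have := G.ne_of_adj hb.1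
      grind [hf.apply_eq_iff b a]
    exact ⟨z, hzX, fun a ha b hb ↦ (eq_x a ha).trans (eq_x b hb).symm⟩
  · refine ⟨x, hx, fun a ha b hb ↦ hf.eq_of_apply_eq_of_adj htri ?_ ha.1 hb.1⟩
    exact apply_eq rfl ha hb (fun h ↦ hpartner ⟨a, h, ha.2⟩) (fun h ↦ hpartner ⟨b, h, hb.2⟩)

lemma closedNbr_map (hf : IsEdgeContraction G u v f) {p : V} (hpu : p ≠ u) (hpv : p ≠ v) :
    closedNbr (G.map f) (f p) = f '' closedNbr G p := by
  have hp (x : V) (hx : f x = f p) : x = p := by grind [hf.apply_eq_iff x p]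
  ext w
  simp only [mem_closedNbr, SimpleGraph.map_adj', Set.mem_image]
  constructor
  · rintro (rfl | ⟨-, x, y, hxy, hx, rfl⟩)
    · exact ⟨p, .inl rfl, rfl⟩
    · exact ⟨y, .inr (hp x hx ▸ hxy), rfl⟩
  · rintro ⟨y, rfl | hpy, rfl⟩
    · exact .inl rfl
    · exact .inr ⟨fun h ↦ hpy.ne (hp y h.symm).symm, p, y, hpy, rfl, rfl⟩

/- Let `w` be adjacent to `p` but not to `q`. If `f p` and `f q` are twins, then `q` is adjacent to
some `z ≠ w` with `f z = f w`, so `{w, z} = {u, v}`. -/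
lemma isRung_of_closedNbr_map_eq (hf : IsEdgeContraction G u v f)
    (htri : ∀ x, G.Adj u x → ¬ G.Adj v x) {p q w : V} (hpu : p ≠ u) (hpv : p ≠ v) (hqu : q ≠ u)
    (hqv : q ≠ v) (hpq : G.Adj p q) (hpw : G.Adj p w) (hqw : ¬ G.Adj q w) (hwq : w ≠ q)
    (heq : closedNbr (G.map f) (f p) = closedNbr (G.map f) (f q)) :
    IsRung G u v p q ∨ IsRung G u v q p := by
  rw [hf.closedNbr_map hpu hpv, hf.closedNbr_map hqu hqv] at heq
  have mem_iff (x : V) (hxu : x ≠ u) (hxv : x ≠ v) (r : V) :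
      f x ∈ f '' closedNbr G r ↔ x ∈ closedNbr G r := by
    refine ⟨fun ⟨y, hy, hyx⟩ ↦ ?_, Set.mem_image_of_mem f⟩
    obtain rfl : y = x := by grind [hf.apply_eq_iff y x]
    exact hy
  have twins (x : V) (hxu : x ≠ u) (hxv : x ≠ v) (hxp : x ≠ p) (hxq : x ≠ q) :
      G.Adj p x ↔ G.Adj q x := by
    have := Set.ext_iff.mp heq (f x)
    rw [mem_iff x hxu hxv, mem_iff x hxu hxv] at this
    simpa only [mem_closedNbr, hxp, hxq, false_or] using this
  have hfw : f w ∈ f '' closedNbr G q := heq ▸ Set.mem_image_of_mem f (.inr hpw)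
  obtain ⟨z, rfl | hqz, hz⟩ := hfw
  · grind [hf.apply_eq_iff z w]
  obtain rfl | ⟨rfl, rfl⟩ | ⟨rfl, rfl⟩ := (hf.apply_eq_iff z w).mp hz
  · exact absurd hqz hqw
  · exact .inr ⟨hf.adj, hqz.symm, hpw.symm, hpq.symm, hpu.symm, hqv.symm, htri,
      fun x hxu hxv hxq hxp ↦ (twins x hxu hxv hxp hxq).symm⟩
  · exact .inl ⟨hf.adj, hpw.symm, hqz.symm, hpq, hqu.symm, hpv.symm, htri, twins⟩

lemma closedNbr_map_ne (hf : IsEdgeContraction G u v f) (htri : ∀ x, G.Adj u x → ¬ G.Adj v x)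
    (hrung : ∀ a b, ¬ IsRung G u v a b) {p q : V} (hpu : p ≠ u) (hpv : p ≠ v) (hqu : q ≠ u)
    (hqv : q ≠ v) (hpq : G.Adj p q) (hne : closedNbr G p ≠ closedNbr G q) :
    closedNbr (G.map f) (f p) ≠ closedNbr (G.map f) (f q) := by
  intro heq
  obtain ⟨w, hwp, hwq, ⟨hpw, hqw⟩ | ⟨hqw, hpw⟩⟩ := exists_adj_of_closedNbr_ne hpq hne
  · exact (hf.isRung_of_closedNbr_map_eq htri hpu hpv hqu hqv hpq hpw hqw hwq heq).elim
      (hrung p q) (hrung q p)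
  · exact (hf.isRung_of_closedNbr_map_eq htri hqu hqv hpu hpv hpq.symm hqw hpw hwp heq.symm).elim
      (hrung q p) (hrung p q)

lemma isGoodColoring_comp (hf : IsEdgeContraction G u v f)
    (htri : ∀ x, G.Adj u x → ¬ G.Adj v x) (hrung : ∀ a b, ¬ IsRung G u v a b)
    (hc : IsGoodColoring (G.map f) c) : IsGoodColoring G (c ∘ f) := by
  refine ⟨fun k ↦ hf.isAcyclic_induce_preimage htri (hc.isAcyclic k), fun p q hpq hne hnbr ↦ ?_⟩
  have hcuv : c (f u) = c (f v) := congrArg c hf.apply_eq_apply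
  have huv := hf.adj
  have huv' := hf.adj.symm
  simp only [Function.comp_apply] at hne ⊢
  by_cases hpu : p = u
  · exact ⟨v, by grind, by grind, by grind, .inl (hpu ▸ huv)⟩
  by_cases hpv : p = v
  · exact ⟨u, by grind, by grind, by grind, .inl (hpv ▸ huv')⟩
  by_cases hqu : q = u
  · exact ⟨v, by grind, by grind, by grind, .inr (hqu ▸ huv)⟩
  by_cases hqv : q = v
  · exact ⟨u, by grind, by grind, by grind, .inr (hqv ▸ huv')⟩
  have exists_adj_of_map_adj {x : V} {w : W} (hxu : x ≠ u) (hxv : x ≠ v)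
      (h : (G.map f).Adj (f x) w) : ∃ y, G.Adj x y ∧ f y = w := by
    obtain ⟨-, x', y, hxy, hx, rfl⟩ := h
    obtain rfl : x' = x := by grind [hf.apply_eq_iff x' x]
    exact ⟨y, hxy, rfl⟩
  obtain ⟨w, hwp, hwq, hcw, hpw | hqw⟩ := hc.exists_adj (f p) (f q)
    (hf.map_adj_apply hpq (by simp [hpu, hpv])) hne
    (hf.closedNbr_map_ne htri hrung hpu hpv hqu hqv hpq hnbr)
  · obtain ⟨y, hpy, rfl⟩ := exists_adj_of_map_adj hpu hpv hpw
    exact ⟨y, ne_of_apply_ne f hwp, ne_of_apply_ne f hwq, hcw, .inl hpy⟩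
  · obtain ⟨y, hqy, rfl⟩ := exists_adj_of_map_adj hqu hqv hqw
    exact ⟨y, ne_of_apply_ne f hwp, ne_of_apply_ne f hwq, hcw, .inr hqy⟩

end IsEdgeContraction

end Uncontraction

section Existence

variable {V : Type*} {G : SimpleGraph V} {u v a b : V}

lemma IsRung.induce {S : Set V} {u v a b : S} (h : IsRung G u v a b) :
    IsRung (G.induce S) u v a b where
  adj_uv := h.adj_uv
  adj_ua := h.adj_ua
  adj_vb := h.adj_vb
  adj_ab := h.adj_ab
  ne_ub := ne_of_apply_ne Subtype.val h.ne_ub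
  ne_va := ne_of_apply_ne Subtype.val h.ne_va
  not_adj_of_adj x := h.not_adj_of_adj x
  adj_iff_adj x hxu hxv hxa hxb := h.adj_iff_adj x (Subtype.coe_ne_coe.mpr hxu)
    (Subtype.coe_ne_coe.mpr hxv) (Subtype.coe_ne_coe.mpr hxa) (Subtype.coe_ne_coe.mpr hxb)

lemma IsRung.not_adj_va (h : IsRung G u v a b) : ¬ G.Adj v a :=
  h.not_adj_of_adj a h.adj_ua

lemma IsRung.not_adj_ub (h : IsRung G u v a b) : ¬ G.Adj u b :=
  fun hub ↦ h.not_adj_of_adj b hub h.adj_vb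

lemma IsRung.bipartite (h : IsRung G u v a b) (hV : ∀ x, x = u ∨ x = v ∨ x = a ∨ x = b) {x y : V}
    (hxy : G.Adj x y) : (x = u ∨ x = b) ∧ (y = v ∨ y = a) ∨ (y = u ∨ y = b) ∧ (x = v ∨ x = a) := by
  have := hxy.ne
  have := hV x
  have := hV y
  grind [h.not_adj_ub, h.not_adj_va, SimpleGraph.adj_comm]

lemma IsRung.exists_isGoodColoring (h : IsRung G u v a b)
    (hV : ∀ x, x = u ∨ x = v ∨ x = a ∨ x = b) : ∃ c, IsGoodColoring G c := by
  have huv := h.adj_uv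
  have hua := h.adj_ua
  have hvb := h.adj_vb
  have hab := h.adj_ab
  have hub := h.ne_ub
  obtain ⟨c, hcu, hcb, hca, hcv⟩ : ∃ c : V → Fin 3, c u = 0 ∧ c b = 0 ∧ c a = 1 ∧ c v = 2 :=
    ⟨fun x ↦ if x = a then 1 else if x = v then 2 else 0, by simp [hua.ne, huv.ne],
      by simp [hab.ne', hvb.ne'], by simp, by simp [h.ne_va]⟩
  have exists_adj {p q : V} (hp : p = u ∨ p = b) (hq : q = v ∨ q = a) :
      ∃ w, w ≠ p ∧ w ≠ q ∧ c w = c p ∧ G.Adj q w := by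
    obtain rfl | rfl := hp
    · exact ⟨b, by grind, by grind, by grind, by grind⟩
    · exact ⟨u, by grind, by grind, by grind, by grind [SimpleGraph.adj_comm]⟩
  refine ⟨c, fun k ↦ ?_, fun p q hpq _ _ ↦ ?_⟩
  · rw [isAcyclic_induce_iff_exists_subsingleton_neighborSet_inter]
    intro X ⟨x, hx⟩ hXk
    obtain ⟨y, hy, hyX⟩ : ∃ y ∈ X, (y = u ∨ y = b) ∨ ∀ z ∈ X, z = v ∨ z = a := by
      by_cases hX : ∃ y ∈ X, y = u ∨ y = b
      · grind
      · exact ⟨x, hx, .inr fun z hz ↦ by grind [hV z]⟩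
    have hk {z : V} (hz : z ∈ X) : c z ≠ k := hXk hz
    refine ⟨y, hy, fun z hz w hw ↦ ?_⟩
    have := h.bipartite hV hz.1
    have := h.bipartite hV hw.1
    have := hk hy
    have := hk hz.2
    have := hk hw.2
    grind
  · obtain ⟨hp, hq⟩ | ⟨hq, hp⟩ := h.bipartite hV hpq
    · obtain ⟨w, hwp, hwq, hcw, hqw⟩ := exists_adj hp hq
      exact ⟨w, hwp, hwq, .inl hcw, .inr hqw⟩
    · obtain ⟨w, hwq, hwp, hcw, hpw⟩ := exists_adj hq hp
      exact ⟨w, hwp, hwq, .inr hcw, .inl hpw⟩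

lemma IsRung.adj_of_adj (h : IsRung G u v a b) {x : V} (hax : G.Adj a x) (hxu : x ≠ u)
    (hxb : x ≠ b) : G.Adj b x :=
  (h.adj_iff_adj x hxu (fun hxv ↦ h.not_adj_va (hxv ▸ hax.symm)) hax.ne' hxb).mp hax

lemma IsRung.not_adj_of_adj_left (h : IsRung G u v a b) (ht : HasTreewidthAtMost G 2) (x : V)
    (hax : G.Adj a x) : ¬ G.Adj u x := by
  intro hux
  have hxv : x ≠ v := fun hxv ↦ h.not_adj_va (hxv ▸ hax.symm)
  have hbx := h.adj_of_adj hax hux.ne' fun hxb ↦ h.not_adj_ub (hxb ▸ hux)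
  exact ht.not_adj_of_subdivided_K4 hax h.adj_ua.symm h.adj_ab hux.symm hbx.symm h.adj_uv
    h.ne_va.symm hxv h.ne_ub h.adj_vb

lemma IsRung.eq_of_isRung (h : IsRung G u v a b) (ht : HasTreewidthAtMost G 2) {c d : V}
    (h' : IsRung G a u c d) : c = b ∧ d = v := by
  have hdb : d ≠ b := fun hdb ↦ h.not_adj_ub (hdb ▸ h'.adj_vb)
  have not_adj_bd (hdv : d ≠ v) : ¬ G.Adj b d := fun hbd ↦
    h'.not_adj_of_adj d
      ((h.adj_iff_adj d h'.adj_vb.ne' hdv h'.ne_ub.symm hdb).mpr hbd) h'.adj_vb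
  obtain rfl : c = b := by
    by_contra hcb
    have hbc := h.adj_of_adj h'.adj_ua h'.ne_va.symm hcb
    obtain rfl | hdv := eq_or_ne d v
    · exact ht.not_adj_of_subdivided_K4 hbc h.adj_ab.symm h.adj_vb.symm h'.adj_ua.symm h'.adj_ab
        h.adj_ua.symm h.ne_ub.symm h'.ne_va.symm h.ne_va.symm h.adj_uv
    · exact not_adj_bd hdv
        ((h'.adj_iff_adj b h.adj_ab.ne' h.ne_ub.symm (Ne.symm hcb) hdb.symm).mp hbc.symm).symm
  refine ⟨rfl, ?_⟩
  by_contra hdv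
  exact not_adj_bd hdv h'.adj_ab

lemma IsRung.rotate (h : IsRung G u v a b) (ht : HasTreewidthAtMost G 2)
    (hrung : ∀ u v, G.Adj u v → (∀ x, G.Adj u x → ¬ G.Adj v x) → ∃ a b, IsRung G u v a b) :
    IsRung G a u b v := by
  obtain ⟨c, d, h'⟩ := hrung a u h.adj_ua.symm (h.not_adj_of_adj_left ht)
  obtain ⟨rfl, rfl⟩ := h.eq_of_isRung ht h'
  exact h'

lemma IsRung.not_adj (h : IsRung G u v a b) (ht : HasTreewidthAtMost G 2)
    (hrung : ∀ u v, G.Adj u v → (∀ x, G.Adj u x → ¬ G.Adj v x) → ∃ a b, IsRung G u v a b)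
    {x : V} (hxu : x ≠ u) (hxv : x ≠ v) (hxa : x ≠ a) (hxb : x ≠ b) : ¬ G.Adj u x := fun hux ↦
  h.not_adj_of_adj x hux <|
    (((h.rotate ht hrung).rotate ht hrung).adj_iff_adj x hxb hxa hxv hxu).mpr hux

lemma IsRung.mem_iff_mem (h : IsRung G u v a b) (ht : HasTreewidthAtMost G 2)
    (hrung : ∀ u v, G.Adj u v → (∀ x, G.Adj u x → ¬ G.Adj v x) → ∃ a b, IsRung G u v a b)
    (x y : V) (hxy : G.Adj x y) :
    x ∈ ({u, v, a, b} : Set V) ↔ y ∈ ({u, v, a, b} : Set V) := by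
  have ha := h.rotate ht hrung
  have hb := ha.rotate ht hrung
  have hv := hb.rotate ht hrung
  have mem_of_adj {x y : V} (hxy : G.Adj x y) (hx : x ∈ ({u, v, a, b} : Set V)) :
      y ∈ ({u, v, a, b} : Set V) := by
    simp only [Set.mem_insert_iff, Set.mem_singleton_iff] at hx ⊢
    by_contra! ⟨hyu, hyv, hya, hyb⟩
    obtain rfl | rfl | rfl | rfl := hx
    · exact h.not_adj ht hrung hyu hyv hya hyb hxy
    · exact hv.not_adj ht hrung hyv hyb hyu hya hxy
    · exact ha.not_adj ht hrung hya hyu hyb hyv hxy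
    · exact hb.not_adj ht hrung hyb hya hyv hyu hxy
  exact ⟨mem_of_adj hxy, mem_of_adj hxy.symm⟩

theorem HasTreewidthAtMost.exists_isGoodColoring [Finite V] (ht : HasTreewidthAtMost G 2) :
    ∃ c, IsGoodColoring G c := by
  induction hn : Nat.card V using Nat.strong_induction_on generalizing V with
  | _ n ih =>
  subst hn
  by_cases hrung : ∀ u v, G.Adj u v → (∀ x, G.Adj u x → ¬ G.Adj v x) → ∃ a b, IsRung G u v a b
  · by_cases htri : ∀ u v, G.Adj u v → ∃ x, G.Adj u x ∧ G.Adj v x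
    · obtain ⟨c, hc⟩ := ht.exists_isLowTreewidthColoring
      exact ⟨c, hc.isAcyclicColoring.isGoodColoring htri⟩
    · push Not at htri
      obtain ⟨u, v, huv, htri⟩ := htri
      obtain ⟨a, b, h⟩ := hrung u v huv htri
      refine exists_isGoodColoring_of_induce (h.mem_iff_mem ht hrung) ?_ ?_
      · refine IsRung.exists_isGoodColoring (u := ⟨u, by simp⟩) (v := ⟨v, by simp⟩)
          (a := ⟨a, by simp⟩) (b := ⟨b, by simp⟩) h.induce fun x ↦ ?_
        simp only [Subtype.ext_iff]
        exact x.2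
      · refine ih _ ?_ (ht.induce _) rfl
        exact Finite.card_subtype_lt (x := u) (by simp)
  · push Not at hrung
    obtain ⟨u, v, huv, htri, hrung⟩ := hrung
    obtain ⟨f, hf⟩ := exists_isEdgeContraction huv
    obtain ⟨c, hc⟩ := ih _ (Finite.card_subtype_lt (x := v) (by simp))
      (hf.hasTreewidthAtMost ht) rfl
    exact ⟨c ∘ f, hf.isGoodColoring_comp htri hrung hc⟩

end Existence

section StrongForest

variable {V : Type*} {G : SimpleGraph V} {S : Set V} {u v w : V}

lemma exists_adj_of_two_le_compEdgeCount (h : 2 ≤ compEdgeCount G u) (v : V) :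
    ∃ x y, (x = u ∨ x = v) ∧ y ≠ u ∧ y ≠ v ∧ G.Adj x y := by
  obtain ⟨e, ⟨he, hreach⟩, hne⟩ := Set.exists_ne_of_one_lt_ncard h s(u, v)
  obtain ⟨z, hz, hzu, hzv⟩ : ∃ z ∈ e, z ≠ u ∧ z ≠ v := by
    induction e with | _ x y
    have hxy : x ≠ y := G.ne_of_adj he
    simp only [ne_eq, Sym2.eq_iff] at hne
    simp only [Sym2.mem_iff, exists_eq_or_imp, exists_eq_left]
    grind
  obtain ⟨p⟩ := hreach z hz
  obtain ⟨d, -, hd, hd'⟩ := p.exists_boundary_dart {x | x = u ∨ x = v} (.inl rfl) (by simp [*])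
  exact ⟨d.fst, d.snd, hd, fun h ↦ hd' (.inl h), fun h ↦ hd' (.inr h), d.adj⟩

lemma two_le_compEdgeCount [Finite V] (huv : G.Adj u v) (hwu : w ≠ u) (hwv : w ≠ v)
    (hw : G.Adj u w ∨ G.Adj v w) : 2 ≤ compEdgeCount G u := by
  have reachable_w : G.Reachable u w := hw.elim (·.reachable) (huv.reachable.trans ·.reachable)
  refine (Set.one_lt_ncard (Set.toFinite _)).mpr ⟨s(u, v), ⟨huv, ?_⟩, ?_⟩
  · simp [huv.reachable]
  · obtain hw | hw := hw
    · exact ⟨s(u, w), ⟨hw, by simp [reachable_w]⟩, by simp [huv.ne', hwv.symm]⟩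
    · exact ⟨s(v, w), ⟨hw, by simp [reachable_w, huv.reachable]⟩, by simp [huv.ne, hwu.symm]⟩

lemma KValid.closedNbr_ne (h : KValid G 2 s(u, v)) : closedNbr G u ≠ closedNbr G v := by
  intro heq
  obtain ⟨S, ⟨hacyc, hS⟩, huv, huvS⟩ := h
  have hu : u ∈ S := huvS u (by simp)
  have hv : v ∈ S := huvS v (by simp)
  obtain ⟨x, w, hx, hwu, hwv, hxw⟩ := exists_adj_of_two_le_compEdgeCount (hS ⟨u, hu⟩) ⟨v, hv⟩
  have adj_iff (w : S) (hwu : w ≠ ⟨u, hu⟩) (hwv : w ≠ ⟨v, hv⟩) : G.Adj u w ↔ G.Adj v w := by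
    have := Set.ext_iff.mp heq w
    simp only [mem_closedNbr] at this
    grind
  refine hacyc.cliqueFree le_rfl {⟨u, hu⟩, ⟨v, hv⟩, w} (SimpleGraph.is3Clique_triple_iff.mpr ?_)
  have := adj_iff w hwu hwv
  obtain rfl | rfl := hx
  · exact ⟨huv, hxw, this.mp hxw⟩
  · exact ⟨huv, this.mpr hxw, hxw⟩

/-- The union of the two-edge paths of `G.induce S`. If `G.induce S` is a forest, this discards its
components with fewer than two edges and so leaves a 2-strong forest. -/
def pathCore (G : SimpleGraph V) (S : Set V) : Set V :=
  {u ∈ S | ∃ v ∈ S, ∃ w ∈ S, G.Adj u v ∧ w ≠ u ∧ w ≠ v ∧ (G.Adj u w ∨ G.Adj v w)}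

lemma mem_pathCore (hu : u ∈ S) (hv : v ∈ S) (hw : w ∈ S) (huv : G.Adj u v) (hwu : w ≠ u)
    (hwv : w ≠ v) (huw : G.Adj u w ∨ G.Adj v w) :
    u ∈ pathCore G S ∧ v ∈ pathCore G S ∧ w ∈ pathCore G S := by
  refine ⟨⟨hu, v, hv, w, hw, huv, hwu, hwv, huw⟩,
    ⟨hv, u, hu, w, hw, huv.symm, hwv, hwu, huw.symm⟩, hw, ?_⟩
  obtain huw | hvw := huw
  · exact ⟨u, hu, v, hv, huw.symm, hwv.symm, huv.ne', .inr huv⟩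
  · exact ⟨v, hv, u, hu, hvw.symm, hwu.symm, huv.ne, .inr huv.symm⟩

lemma isStrongForest_pathCore [Finite V] (hS : (G.induce S).IsAcyclic) :
    IsStrongForest G 2 (pathCore G S) := by
  refine ⟨?_, ?_⟩
  · have hsub : pathCore G S ⊆ S := Set.sep_subset _ _
    exact hS.comap (G.induceHomOfLE hsub).toHom (Set.inclusion_injective hsub)
  · rintro ⟨u, hu, v, hv, w, hw, huv, hwu, hwv, huw⟩
    obtain ⟨-, hv, hw⟩ := mem_pathCore hu hv hw huv hwu hwv huw
    exact two_le_compEdgeCount (v := ⟨v, hv⟩) (w := ⟨w, hw⟩) huv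
      (ne_of_apply_ne Subtype.val hwu) (ne_of_apply_ne Subtype.val hwv) huw

lemma isAcyclic_induce_image_val {R : Set V} {S : Set R} (hS : ((G.induce R).induce S).IsAcyclic) :
    (G.induce (Subtype.val '' S)).IsAcyclic := by
  have mem {x : V} (hx : x ∈ Subtype.val '' S) :
      ∃ hxR : x ∈ R, (⟨x, hxR⟩ : R) ∈ S := by
    obtain ⟨y, hy, rfl⟩ := hx
    exact ⟨y.2, hy⟩
  exact hS.comap ⟨fun x ↦ ⟨⟨x, (mem x.2).1⟩, (mem x.2).2⟩, id⟩ fun x y hxy ↦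
    Subtype.ext (congrArg (fun z ↦ z.1.1) hxy)

theorem exists_strongForest_cover_of_hasTreewidthAtMost_induce [Finite V] {R : Set V}
    (h : HasTreewidthAtMost (G.induce R) 2) :
    ∃ F : Fin 3 → Set V, (∀ k, IsStrongForest G 2 (F k)) ∧ ∀ u ∈ R, ∀ v ∈ R, ∀ w ∈ R, G.Adj u v →
      ¬ (w ∈ closedNbr G u ↔ w ∈ closedNbr G v) → ∃ k, s(u, v) ∈ forestEdges G (F k) := by
  obtain ⟨c, hc⟩ := h.exists_isGoodColoring
  refine ⟨fun k ↦ pathCore G (Subtype.val '' {x | c x ≠ k}), fun k ↦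
    isStrongForest_pathCore (isAcyclic_induce_image_val (hc.isAcyclic k)), ?_⟩
  intro u hu v hv w hw huv hwuv
  lift u to R using hu
  lift v to R using hv
  lift w to R using hw
  have hne : closedNbr (G.induce R) u ≠ closedNbr (G.induce R) v := fun heq ↦ hwuv <| by
    simpa [mem_closedNbr, Subtype.ext_iff] using Set.ext_iff.mp heq w
  obtain ⟨x, k, hxu, hxv, huvx, hku, hkv, hkx⟩ : ∃ (x : R) (k : Fin 3),
      x ≠ u ∧ x ≠ v ∧ (G.Adj u x ∨ G.Adj v x) ∧
      c u ≠ k ∧ c v ≠ k ∧ c x ≠ k := by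
    have exists_ne_ne (i j : Fin 3) : ∃ k, i ≠ k ∧ j ≠ k := by decide +revert
    by_cases hcuv : c u = c v
    · obtain ⟨x, hxu, hxv, hx⟩ := exists_adj_of_closedNbr_ne (G := G.induce R) huv hne
      obtain ⟨k, hk, hk'⟩ := exists_ne_ne (c u) (c x)
      exact ⟨x, k, hxu, hxv, hx.imp And.left And.left, hk, hcuv ▸ hk, hk'⟩
    · obtain ⟨x, hxu, hxv, hcx, hx⟩ := hc.exists_adj u v huv hcuv hne
      obtain ⟨k, hk, hk'⟩ := exists_ne_ne (c u) (c v)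
      exact ⟨x, k, hxu, hxv, hx, hk, hk', by grind⟩
  have mem {y : R} (hy : c y ≠ k) : y.1 ∈ Subtype.val '' {x | c x ≠ k} := ⟨y, hy, rfl⟩
  obtain ⟨hu, hv, -⟩ := mem_pathCore (mem hku) (mem hkv) (mem hkx) huv (Subtype.coe_ne_coe.mpr hxu)
    (Subtype.coe_ne_coe.mpr hxv) huvx
  exact ⟨k, huv, by simp [hu, hv]⟩

end StrongForest

section Main

variable {V : Type*} {G : SimpleGraph V}

lemma fStrong_le_card {ι : Type*} [Finite ι] {k : ℕ} (F : ι → Set V)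
    (hF : ∀ i, IsStrongForest G k (F i))
    (hcover : ∀ e, KValid G k e → ∃ i, e ∈ forestEdges G (F i)) : fStrong G k ≤ Nat.card ι := by
  let e := Finite.equivFin ι
  refine Nat.sInf_le ⟨F ∘ e.symm, fun i ↦ hF _, fun x hx ↦ ?_⟩
  obtain ⟨i, hi⟩ := hcover x hx
  exact ⟨e i, by simpa using hi⟩

lemma hasTreewidthAtMost_treewidth (h : 0 < treewidth G) : HasTreewidthAtMost G (treewidth G) :=
  Nat.sInf_mem (Nat.nonempty_of_pos_sInf h)

end Main

/-- Every finite simple graph `G` of tree-width `t ≥ 2` has 2-strong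
induced arboricity `f₂(G) ≤ 3 * (t+1 choose 3)`. -/
theorem fStrong_two_le_of_treewidth {V : Type} [Fintype V] (G : SimpleGraph V) (t : ℕ)
    (ht : 2 ≤ t) (htw : treewidth G = t) :
    fStrong G 2 ≤ 3 * (t + 1).choose 3 := by
  have hG : HasTreewidthAtMost G t := htw ▸ hasTreewidthAtMost_treewidth (by lia)
  obtain ⟨c, hc⟩ := hG.exists_isLowTreewidthColoring
  have exists_cover (A : {A : Finset (Fin (t + 1)) // A.card = 3}) :=
    exists_strongForest_cover_of_hasTreewidthAtMost_induce (hc A 2 A.2.le)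
  choose F hF hcover using exists_cover
  have hle : fStrong G 2 ≤ Nat.card ({A : Finset (Fin (t + 1)) // A.card = 3} × Fin 3) := by
    refine fStrong_le_card (fun i ↦ F i.1 i.2) (fun i ↦ hF i.1 i.2) fun e he ↦ ?_
    induction e with | _ u v
    have ⟨_, _, huv, _⟩ := he
    obtain ⟨w, hw⟩ := not_forall.mp (mt Set.ext he.closedNbr_ne)
    obtain ⟨A, hA, -, hcard⟩ := Finset.exists_subsuperset_card_eq
      (Finset.subset_univ {c u, c v, c w}) Finset.card_le_three (by simpa using ht)
    simp only [Finset.insert_subset_iff, Finset.singleton_subset_iff] at hA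
    obtain ⟨k, hk⟩ := hcover ⟨A, hcard⟩ u hA.1 v hA.2.1 w hA.2.2 huv hw
    exact ⟨(⟨A, hcard⟩, k), hk⟩
  calc fStrong G 2 ≤ Nat.card ({A : Finset (Fin (t + 1)) // A.card = 3} × Fin 3) := hle
    _ = 3 * (t + 1).choose 3 := by simp [mul_comm]

end InducedArboricity
end
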